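/- Let K be any field, and let G_36 ⊆ S_8 be the subgroup of order 168 generated by σ_1 = (1,2)(3,4)(5,6)(7,8), σ_2 = (1,3)(2,4)(5,7)(6,8), κ = (1,5)(2,6)(3,7)(4,8), θ = (2,3,7,4,5,6,8), and φ_1 = (2,3,4)(7,6,5). Then the fixed field K(x_1,…,x_8)^{G_36} is K-rational. -/

import Mathlib

noncomputable section

/-- The rational function field `K(x_i : i ∈ I)` over `K`, realized as the fraction field
of the multivariate polynomial ring. -/
abbrev RFF (K : Type) [Field K] (I : Type) := FractionRing (MvPolynomial I K)

/-- The image of the variable `x_i` in the rational function field `K(x_i : i ∈ I)`. -/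
noncomputable def Xvar (K : Type) [Field K] (I : Type) (i : I) : RFF K I :=
  algebraMap (MvPolynomial I K) (RFF K I) (MvPolynomial.X i)

/-- Permutations of the variables as `K`-algebra automorphisms of the polynomial ring. -/
def renameHom (K : Type) [Field K] (I : Type) :
    Equiv.Perm I →* (MvPolynomial I K ≃ₐ[K] MvPolynomial I K) where
  toFun σ := MvPolynomial.renameEquiv K σ
  map_one' := MvPolynomial.renameEquiv_refl K
  map_mul' σ τ := (MvPolynomial.renameEquiv_trans K τ σ).symm

/-- The action of permutations of the variables on `K(x_i : i ∈ I)` by `K`-automorphisms,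
determined by `σ(x_i) = x_{σ(i)}`. -/
noncomputable def permHom (K : Type) [Field K] (I : Type) :
    Equiv.Perm I →* (RFF K I ≃ₐ[K] RFF K I) :=
  (IsFractionRing.fieldEquivOfAlgEquivHom K (RFF K I)).comp (renameHom K I)

/-- The fixed field `K(x_i : i ∈ I)^G` of a group `G` of permutations of the variables. -/
noncomputable def fixedSub (K : Type) [Field K] (I : Type) (G : Subgroup (Equiv.Perm I)) :
    IntermediateField K (RFF K I) :=
  IntermediateField.fixedField (G.map (permHom K I))

/-- An extension `L/K` is `K`-rational if it is purely transcendental over `K`, i.e. generated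
by finitely many algebraically independent elements. -/
def IsRatExt (K : Type) [Field K] (L : Type*) [Field L] [Algebra K L] : Prop :=
  ∃ (n : ℕ) (t : Fin n → L), AlgebraicIndependent K t ∧
    IntermediateField.adjoin K (Set.range t) = ⊤

/-!
`G₃₆` consists of the maps `x ↦ a · τ x + b` of the field `𝔽₈`, with `a ≠ 0` and `τ` a power of the
Frobenius, so its order is `8 · 7 · 3 = 168`. Suppose eight invariant functions are given such that
`K(x)` has degree at most `168` over the field they generate. By Artin's theorem they generate the
whole fixed field, and since there are eight of them they are algebraically independent.

The factor `3` comes from Masuda's invariants of a cyclic permutation of three variables: it remains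
to find eight functions which are invariant under the affine maps, are permuted by the Frobenius
`φ₁` with two fixed points and two triples, and have degree at most `56`. This bound may be checked
over an extension of `K`.

If `2 ≠ 0`, the translations are diagonalised by the characters of `𝔽₂³`. Products of three of the
resulting eigenfunctions along a line of the Fano plane are invariant under translations, and `θ`
permutes the seven of them cyclically. A seventh root of unity turns this cycle into a problem of
Kummer theory, and in characteristic seven moments turn it into one of Artin–Schreier theory. If
`2 = 0`, the analogous moments of the function `a ↦ xₐ` on `𝔽₈` are used, written in a normal basis
so that the coefficients lie in `K`.
-/

section Degree

open Polynomial IntermediateField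

variable {K L : Type*} [Field K] [Field L] [Algebra K L]

theorem rank_anti {E F : IntermediateField K L} (h : E ≤ F) :
    Module.rank F L ≤ Module.rank E L := by
  let := (inclusion h).toAlgebra
  have : IsScalarTower E F L := .of_algebraMap_eq fun _ => rfl
  have : FaithfulSMul E F :=
    (faithfulSMul_iff_algebraMap_injective _ _).mpr (RingHom.injective _)
  exact Module.rank_top_le_rank_of_isScalarTower E F L

theorem rank_le_natDegree_mul_rank_sup (E : IntermediateField K L) {a : L} {p : E[X]}
    (hp : p.Monic) (ha : aeval a p = 0) :
    Module.rank E L ≤ p.natDegree * Module.rank ↥(E ⊔ K⟮a⟯) L := by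
  have int_a : IsIntegral E a := ⟨p, hp, ha⟩
  have deg_le : Module.rank E E⟮a⟯ ≤ p.natDegree := by
    have := adjoin.finiteDimensional int_a
    rw [← Module.finrank_eq_rank, adjoin.finrank int_a]
    exact_mod_cast natDegree_le_natDegree (minpoly.min _ _ hp ha)
  rw [← restrictScalars_adjoin_eq_sup K E {a}]
  calc Module.rank E L = Module.rank E E⟮a⟯ * Module.rank E⟮a⟯ L := (rank_mul_rank E E⟮a⟯ L).symm
    _ ≤ p.natDegree * Module.rank E⟮a⟯ L := mul_le_mul_left deg_le _

theorem rank_le_mul_rank_sup_of_pow_mem (E : IntermediateField K L) {a : L} {n : ℕ} (hn : n ≠ 0)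
    (ha : a ^ n ∈ E) : Module.rank E L ≤ n * Module.rank ↥(E ⊔ K⟮a⟯) L := by
  have h := rank_le_natDegree_mul_rank_sup E (monic_X_pow_sub_C (⟨a ^ n, ha⟩ : E) hn)
    (a := a) (by simp [IntermediateField.algebraMap_apply])
  rwa [natDegree_X_pow_sub_C] at h

theorem rank_le_mul_rank_sup_of_pow_sub_self_mem (E : IntermediateField K L) {a : L} {n : ℕ}
    (hn : 1 < n) (ha : a ^ n - a ∈ E) : Module.rank E L ≤ n * Module.rank ↥(E ⊔ K⟮a⟯) L := by
  have deg_lt : (X + C ⟨a ^ n - a, ha⟩ : E[X]).degree < n := by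
    rw [degree_X_add_C]
    exact_mod_cast hn
  have h := rank_le_natDegree_mul_rank_sup E (monic_X_pow_sub deg_lt) (a := a)
    (by simp [IntermediateField.algebraMap_apply])
  rwa [natDegree_sub_eq_left_of_natDegree_lt, natDegree_X_pow] at h
  simpa using hn

theorem rank_le_three_mul_rank_sup (E : IntermediateField K L) (a b c : L) (h₁ : a + b + c ∈ E)
    (h₂ : a * b + b * c + c * a ∈ E) (h₃ : a * b * c ∈ E) :
    Module.rank E L ≤ 3 * Module.rank ↥(E ⊔ K⟮a⟯) L := by
  set p : E[X] := X ^ 3 - (C ⟨_, h₁⟩ * X ^ 2 - C ⟨_, h₂⟩ * X + C ⟨_, h₃⟩) with hp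
  have deg_p : p.natDegree = 3 := by rw [hp]; compute_degree!
  have h := rank_le_natDegree_mul_rank_sup E (p := p) (a := a) (by rw [hp]; monicity!) (by
    simp only [hp, map_sub, map_add, map_mul, map_pow, aeval_X, aeval_C,
      IntermediateField.algebraMap_apply]
    ring)
  simpa [deg_p] using h

theorem algebraicIndependent_of_finiteDimensional_adjoin {ι : Type*} [Finite ι] {x g : ι → L}
    (hx : AlgebraicIndependent K x) [FiniteDimensional (adjoin K (Set.range g)) L] :
    AlgebraicIndependent K g := by
  have : Algebra.IsAlgebraic (Algebra.adjoin K (Set.range g)) L :=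
    open scoped IntermediateField.algebraAdjoinAdjoin in
    Algebra.IsAlgebraic.trans _ (adjoin K (Set.range g)) _
  exact (Algebra.IsAlgebraic.isTranscendenceBasis_of_lift_le_trdeg_of_finite K g
    hx.lift_cardinalMk_le_trdeg).1

end Degree

section BaseChange

open IntermediateField

theorem rank_adjoin_le_of_rank_adjoin_image_le {K K' L L' : Type} [Field K] [Field K'] [Field L]
    [Field L'] [Algebra K K'] [Algebra K L] [Algebra K L'] [Algebra K' L'] [Algebra L L']
    [IsScalarTower K K' L'] [IsScalarTower K L L'] [FiniteDimensional K K']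
    (rank_eq : Module.rank L L' = Module.rank K K') {S : Set L} {m : ℕ}
    (hS : Module.rank (adjoin K' (algebraMap L L' '' S)) L' ≤ m) :
    Module.rank (adjoin K S) L ≤ m := by
  set E := adjoin K S
  set B : IntermediateField K L' := (IsScalarTower.toAlgHom K K' L').fieldRange
  set F : IntermediateField E L' := adjoin E (B : Set L')
  have rank_B : Module.rank K B = Module.rank K K' :=
    (AlgEquiv.ofInjectiveField (IsScalarTower.toAlgHom K K' L')).toLinearEquiv.rank_eq.symm
  have rank_F : Module.rank E F ≤ Module.rank K K' := by
    have : FiniteDimensional K B := Module.rank_lt_aleph0_iff.mp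
      (rank_B ▸ Module.rank_lt_aleph0_iff.mpr inferInstance)
    exact (adjoin_rank_le_of_isAlgebraic_right E B).trans_eq rank_B
  have mem_F : ∀ c : K', algebraMap K' L' c ∈ F := fun c => subset_adjoin E _ ⟨c, rfl⟩
  have image_subset : algebraMap L L' '' S ⊆ F := by
    rintro _ ⟨s, hs, rfl⟩
    exact F.algebraMap_mem ⟨s, subset_adjoin K S hs⟩
  have rank_L' : Module.rank F L' ≤ m :=
    (rank_anti (F := F.toSubfield.toIntermediateField mem_F)
      (adjoin_le_iff.mpr image_subset)).trans hS
  have rank_mul_le : Module.rank E L * Module.rank K K' ≤ m * Module.rank K K' := calc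
    Module.rank E L * Module.rank K K' = Module.rank E F * Module.rank F L' := by
      rw [← rank_eq, rank_mul_rank E L L', rank_mul_rank E F L']
    _ ≤ Module.rank K K' * m := mul_le_mul' rank_F rank_L'
    _ = m * Module.rank K K' := mul_comm _ _
  have finrank_pos : 0 < Module.finrank K K' := Module.finrank_pos
  rw [← Module.finrank_eq_rank K K'] at rank_mul_le
  obtain ⟨r, hr⟩ := Cardinal.lt_aleph0.mp <|
    (Cardinal.le_mul_right (mod_cast finrank_pos.ne')).trans_lt <|
      rank_mul_le.trans_lt (mod_cast Cardinal.natCast_lt_aleph0)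
  rw [hr] at rank_mul_le ⊢
  exact mod_cast Nat.le_of_mul_le_mul_right (mod_cast rank_mul_le) finrank_pos

/-- The map `K(x_i : i ∈ I) → K'(x_i : i ∈ I)` induced by a homomorphism `K → K'` of coefficient
fields. -/
def RFF.map {K K' : Type} [Field K] [Field K'] (φ : K →+* K') (I : Type) :
    RFF K I →+* RFF K' I :=
  IsFractionRing.map (A := MvPolynomial I K) (B := MvPolynomial I K')
    (MvPolynomial.map_injective φ φ.injective)

theorem RFF.map_algebraMap {K K' : Type} [Field K] [Field K'] (φ : K →+* K') {I : Type}
    (P : MvPolynomial I K) :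
    RFF.map φ I (algebraMap _ _ P) = algebraMap _ _ (MvPolynomial.map φ P) :=
  IsLocalization.map_eq
    (nonZeroDivisors_le_comap_nonZeroDivisors_of_injective _
      (MvPolynomial.map_injective φ φ.injective)) P

theorem RFF.map_Xvar {K K' : Type} [Field K] [Field K'] (φ : K →+* K') {I : Type} (i : I) :
    RFF.map φ I (Xvar K I i) = Xvar K' I i := by
  rw [Xvar, map_algebraMap, MvPolynomial.map_X, Xvar]

attribute [local instance] MvPolynomial.algebraMvPolynomial in
theorem RFF.rank_adjoin_le_of_baseChange {K K' : Type} [Field K] [Field K'] [Algebra K K']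
    [FiniteDimensional K K'] {I : Type} {S : Set (RFF K I)} {m : ℕ}
    (hS : Module.rank (adjoin K' (RFF.map (algebraMap K K') I '' S)) (RFF K' I) ≤ m) :
    Module.rank (adjoin K S) (RFF K I) ≤ m := by
  let := (RFF.map (algebraMap K K') I).toAlgebra
  have : IsScalarTower (MvPolynomial I K) (RFF K I) (RFF K' I) :=
    .of_algebraMap_eq fun P => (map_algebraMap (algebraMap K K') P).symm
  have : IsScalarTower K (RFF K I) (RFF K' I) := .to₁₃₄ K (MvPolynomial I K) _ _
  have rank_eq : Module.rank (RFF K I) (RFF K' I) = Module.rank K K' := by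
    rw [Algebra.IsAlgebraic.rank_of_isFractionRing (MvPolynomial I K) (RFF K I)
      (MvPolynomial I K') (RFF K' I), rank_mvPolynomial_mvPolynomial, Cardinal.lift_id]
  exact rank_adjoin_le_of_rank_adjoin_image_le rank_eq hS

end BaseChange

section FixedField

open IntermediateField

theorem Xvar_injective (K : Type) [Field K] (I : Type) : Function.Injective (Xvar K I) :=
  (IsFractionRing.injective (MvPolynomial I K) (RFF K I)).comp MvPolynomial.X_injective

theorem algebraicIndependent_Xvar (K : Type) [Field K] (I : Type) :
    AlgebraicIndependent K (Xvar K I) :=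
  (MvPolynomial.algebraicIndependent_X I K).map' (f := IsScalarTower.toAlgHom K _ (RFF K I))
    (IsFractionRing.injective _ _)

theorem adjoin_range_Xvar (K : Type) [Field K] (I : Type) :
    adjoin K (Set.range (Xvar K I)) = ⊤ := by
  have algebraMap_mem (P : MvPolynomial I K) :
      algebraMap _ (RFF K I) P ∈ adjoin K (Set.range (Xvar K I)) := by
    induction P using MvPolynomial.induction_on with
    | C c => exact (adjoin K _).algebraMap_mem c
    | add P Q hP hQ => rw [map_add]; exact add_mem hP hQ
    | mul_X P i hP => rw [map_mul]; exact mul_mem hP (subset_adjoin K _ ⟨i, rfl⟩)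
  refine eq_top_iff.mpr fun r _ => ?_
  obtain ⟨P, Q, -, rfl⟩ := IsFractionRing.div_surjective (A := MvPolynomial I K) r
  exact div_mem (algebraMap_mem P) (algebraMap_mem Q)

theorem aeval_Xvar_ne_zero {K : Type} [Field K] {I : Type} {P : MvPolynomial I K} {x : I → K}
    (h : MvPolynomial.eval x P ≠ 0) : MvPolynomial.aeval (Xvar K I) P ≠ 0 := by
  rw [ne_eq, map_eq_zero_iff _ (algebraicIndependent_Xvar K I)]
  rintro rfl
  exact h (map_zero _)

theorem permHom_Xvar (K : Type) [Field K] {I : Type} (σ : Equiv.Perm I) (i : I) :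
    permHom K I σ (Xvar K I i) = Xvar K I (σ i) := by
  simp [permHom, renameHom, Xvar]

theorem permHom_injective (K : Type) [Field K] (I : Type) : Function.Injective (permHom K I) := by
  intro σ τ h
  ext1 i
  apply Xvar_injective K I
  rw [← permHom_Xvar, ← permHom_Xvar, h]

theorem finrank_fixedSub (K : Type) [Field K] {I : Type} [Finite I] (G : Subgroup (Equiv.Perm I)) :
    Module.finrank (fixedSub K I G) (RFF K I) = Nat.card G := by
  have : Finite (G.map (permHom K I)) :=
    Finite.of_surjective _ ((permHom K I).subgroupMap_surjective G)
  have := Fintype.ofFinite (G.map (permHom K I))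
  rw [← Subgroup.card_map_of_injective (permHom_injective K I), Nat.card_eq_fintype_card]
  exact FixedPoints.finrank_eq_card (G.map (permHom K I)) (RFF K I)

theorem mem_fixedSub_closure {K : Type} [Field K] {I : Type} {S : Set (Equiv.Perm I)}
    {f : RFF K I} (hf : ∀ σ ∈ S, permHom K I σ f = f) :
    f ∈ fixedSub K I (Subgroup.closure S) := by
  have closure_le : Subgroup.closure S ≤ (MulAction.stabilizer _ f).comap (permHom K I) :=
    (Subgroup.closure_le _).mpr hf
  rintro ⟨_, σ, hσ, rfl⟩
  exact closure_le hσ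

theorem isRatExt_fixedSub_of_rank_le {K : Type} [Field K] {n : ℕ}
    {G : Subgroup (Equiv.Perm (Fin n))} {f : Fin n → RFF K (Fin n)}
    (hf : ∀ i, f i ∈ fixedSub K (Fin n) G)
    (hrank : Module.rank (adjoin K (Set.range f)) (RFF K (Fin n)) ≤ Nat.card G) :
    IsRatExt K (fixedSub K (Fin n) G) := by
  have : FiniteDimensional (adjoin K (Set.range f)) (RFF K (Fin n)) :=
    Module.rank_lt_aleph0_iff.mp (hrank.trans_lt Cardinal.natCast_lt_aleph0)
  have adjoin_eq : adjoin K (Set.range f) = fixedSub K (Fin n) G := by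
    refine eq_of_le_of_finrank_le' (adjoin_le_iff.mpr (Set.range_subset_iff.mpr hf)) ?_
    rw [finrank_fixedSub]
    exact Module.finrank_le_of_rank_le hrank
  refine ⟨n, fun i => ⟨f i, hf i⟩, ?_, ?_⟩
  · have indep : AlgebraicIndependent K f :=
      algebraicIndependent_of_finiteDimensional_adjoin (algebraicIndependent_Xvar K (Fin n))
    exact .of_comp (fixedSub K (Fin n) G).val indep
  · apply lift_injective
    rw [lift_top, lift_adjoin, ← Set.range_comp]
    exact adjoin_eq

end FixedField

section CyclicCubic

open IntermediateField

/-- The norm form `a² + b² + c² - ab - bc - ca` of the cyclic cubic permutation module, that is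
`(a + ωb + ω²c)(a + ω²b + ωc)` for a primitive cube root of unity `ω`. -/
def cubicNorm {M : Type*} [CommRing M] (a b c : M) : M :=
  a ^ 2 + b ^ 2 + c ^ 2 - a * b - b * c - c * a

/-- Masuda's generator of the field of invariants of the rotation `a ↦ b ↦ c ↦ a`. Together with
`a + b + c`, the two quotients `masudaQuot a b c` and `masudaQuot a c b` generate this field. -/
def masudaQuot {M : Type*} [Field M] (a b c : M) : M :=
  (a * b ^ 2 + b * c ^ 2 + c * a ^ 2 - 3 * a * b * c) / cubicNorm a b c

variable {M : Type*} [Field M] {a b c : M}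

theorem masudaQuot_rotate (a b c : M) : masudaQuot b c a = masudaQuot a b c := by
  unfold masudaQuot cubicNorm
  congr 1 <;> ring

theorem masudaQuot_mul_cubicNorm (h : cubicNorm a b c ≠ 0) :
    masudaQuot a b c * cubicNorm a b c =
      a * b ^ 2 + b * c ^ 2 + c * a ^ 2 - 3 * a * b * c :=
  div_mul_cancel₀ _ h

theorem masudaQuot_swap_mul_cubicNorm (h : cubicNorm a b c ≠ 0) :
    masudaQuot a c b * cubicNorm a b c =
      a ^ 2 * b + b ^ 2 * c + c ^ 2 * a - 3 * a * b * c := by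
  have norm_swap : cubicNorm a b c = cubicNorm a c b := by
    unfold cubicNorm
    ring
  rw [norm_swap] at h ⊢
  rw [masudaQuot_mul_cubicNorm h]
  ring

theorem esymm_two_eq_masudaQuot (h : cubicNorm a b c ≠ 0) :
    a * b + b * c + c * a = (a + b + c) * (masudaQuot a b c + masudaQuot a c b) -
      3 * (masudaQuot a b c ^ 2 - masudaQuot a b c * masudaQuot a c b + masudaQuot a c b ^ 2) := by
  have hu := masudaQuot_mul_cubicNorm h
  have hv := masudaQuot_swap_mul_cubicNorm h
  set u := masudaQuot a b c
  set v := masudaQuot a c b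
  refine mul_right_cancel₀ (pow_ne_zero 2 h) ?_
  calc (a * b + b * c + c * a) * cubicNorm a b c ^ 2
      = (a + b + c) * (u * cubicNorm a b c + v * cubicNorm a b c) * cubicNorm a b c -
        3 * ((u * cubicNorm a b c) ^ 2 - u * cubicNorm a b c * (v * cubicNorm a b c) +
          (v * cubicNorm a b c) ^ 2) := by
        rw [hu, hv, cubicNorm]
        ring
    _ = _ := by ring

theorem esymm_three_eq_masudaQuot (h : cubicNorm a b c ≠ 0) :
    a * b * c = (a + b + c) * (masudaQuot a b c * masudaQuot a c b) -
      (masudaQuot a b c ^ 3 + masudaQuot a c b ^ 3) := by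
  have hu := masudaQuot_mul_cubicNorm h
  have hv := masudaQuot_swap_mul_cubicNorm h
  set u := masudaQuot a b c
  set v := masudaQuot a c b
  refine mul_right_cancel₀ (pow_ne_zero 3 h) ?_
  calc a * b * c * cubicNorm a b c ^ 3
      = (a + b + c) * (u * cubicNorm a b c * (v * cubicNorm a b c)) * cubicNorm a b c -
        ((u * cubicNorm a b c) ^ 3 + (v * cubicNorm a b c) ^ 3) := by
        rw [hu, hv, cubicNorm]
        ring
    _ = _ := by ring

variable {K L : Type*} [Field K] [Field L] [Algebra K L]

theorem mem_of_masudaQuot_mem {F : IntermediateField K L} {a b c : L} (h : cubicNorm a b c ≠ 0)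
    (hab : a ≠ b) (hac : a ≠ c) (ha : a ∈ F) (h₁ : a + b + c ∈ F) (h₂ : a * b + b * c + c * a ∈ F)
    (hu : masudaQuot a b c ∈ F) : b ∈ F ∧ c ∈ F := by
  have three_mem : (3 : L) ∈ F := ofNat_mem F 3
  have add_mem' : b + c ∈ F := by
    convert sub_mem h₁ ha using 1
    ring
  have mul_mem' : b * c ∈ F := by
    convert sub_mem h₂ (mul_mem ha add_mem') using 1
    ring
  have norm_mem : cubicNorm a b c ∈ F := by
    convert sub_mem (pow_mem h₁ 2) (mul_mem three_mem h₂) using 1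
    rw [cubicNorm]
    ring
  have num_mem := mul_mem hu norm_mem
  rw [masudaQuot_mul_cubicNorm h] at num_mem
  have b_eq : b = (a ^ 2 * (b + c) - a * (b * c) + b * c * (b + c) - 3 * a * (b * c) -
      (a * b ^ 2 + b * c ^ 2 + c * a ^ 2 - 3 * a * b * c)) / (a ^ 2 - a * (b + c) + b * c) := by
    rw [eq_div_iff]
    · ring
    · rw [show a ^ 2 - a * (b + c) + b * c = (a - b) * (a - c) by ring]
      exact mul_ne_zero (sub_ne_zero.mpr hab) (sub_ne_zero.mpr hac)
  have hb : b ∈ F := by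
    rw [b_eq]
    apply_rules [add_mem, sub_mem, mul_mem, div_mem, pow_mem]
  refine ⟨hb, ?_⟩
  simpa using sub_mem add_mem' hb

theorem mem_of_moments_mem {F : IntermediateField K L} {a b c a' b' c' : L} (hab : a ≠ b)
    (hac : a ≠ c) (ha : a ∈ F) (hb : b ∈ F) (hc : c ∈ F) (h₀ : a' + b' + c' ∈ F)
    (h₁ : a * a' + b * b' + c * c' ∈ F) (h₂ : a ^ 2 * a' + b ^ 2 * b' + c ^ 2 * c' ∈ F) :
    a' ∈ F := by
  have a'_eq : a' = (a ^ 2 * a' + b ^ 2 * b' + c ^ 2 * c' - (b + c) * (a * a' + b * b' + c * c') +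
      b * c * (a' + b' + c')) / ((a - b) * (a - c)) := by
    rw [eq_div_iff (mul_ne_zero (sub_ne_zero.mpr hab) (sub_ne_zero.mpr hac))]
    ring
  rw [a'_eq]
  apply_rules [add_mem, sub_mem, mul_mem, div_mem]

/-- The rotation of the first three and of the next three of eight indices. -/
def rotateTriples : Fin 8 → Fin 8 := ![1, 2, 0, 4, 5, 3, 6, 7]

/-- Generators of the field of functions of `u` invariant under `rotateTriples`: Masuda's
generators for the first triple, and the moments of the second triple with respect to the first
one. -/
def tripleInvariants (u : Fin 8 → M) : Fin 8 → M :=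
  ![u 0 + u 1 + u 2, masudaQuot (u 0) (u 1) (u 2), masudaQuot (u 0) (u 2) (u 1),
    u 3 + u 4 + u 5, u 0 * u 3 + u 1 * u 4 + u 2 * u 5,
    u 0 ^ 2 * u 3 + u 1 ^ 2 * u 4 + u 2 ^ 2 * u 5, u 6, u 7]

theorem masudaQuot_map {N : Type*} [Field N] (φ : M →+* N) (a b c : M) :
    masudaQuot (φ a) (φ b) (φ c) = φ (masudaQuot a b c) := by
  simp only [masudaQuot, cubicNorm, map_div₀, map_add, map_sub, map_mul, map_pow, map_ofNat]

theorem tripleInvariants_map {N : Type*} [Field N] (φ : M →+* N) (u : Fin 8 → M) :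
    tripleInvariants (φ ∘ u) = φ ∘ tripleInvariants u := by
  funext i
  fin_cases i <;> simp [tripleInvariants, masudaQuot_map]

theorem tripleInvariants_rotateTriples (u : Fin 8 → M) :
    tripleInvariants (u ∘ rotateTriples) = tripleInvariants u := by
  have h₁ := masudaQuot_rotate (u 0) (u 1) (u 2)
  have h₂ := (masudaQuot_rotate (u 1) (u 0) (u 2)).symm
  funext i
  fin_cases i <;>
    first
    | exact h₁
    | exact h₂
    | rfl
    | dsimp [tripleInvariants, rotateTriples]; ring

theorem range_subset_of_tripleInvariants_mem {F : IntermediateField K L} {u : Fin 8 → L}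
    (hu : u.Injective) (h : cubicNorm (u 0) (u 1) (u 2) ≠ 0) (hF : ∀ i, tripleInvariants u i ∈ F)
    (esymm_two_mem : u 0 * u 1 + u 1 * u 2 + u 2 * u 0 ∈ F) (h₀ : u 0 ∈ F) :
    Set.range u ⊆ F := by
  have ne {i j : Fin 8} (hij : i ≠ j) : u i ≠ u j := hu.ne hij
  obtain ⟨h₁, h₂⟩ := mem_of_masudaQuot_mem h (ne (by decide)) (ne (by decide)) h₀ (hF 0)
    esymm_two_mem (hF 1)
  have h₃ : u 3 ∈ F := mem_of_moments_mem (ne (by decide)) (ne (by decide)) h₀ h₁ h₂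
    (hF 3) (hF 4) (hF 5)
  have h₄ : u 4 ∈ F := mem_of_moments_mem (a := u 1) (b := u 0) (c := u 2) (b' := u 3) (c' := u 5)
    (ne (by decide)) (ne (by decide)) h₁ h₀ h₂
    (add_comm (u 3) (u 4) ▸ hF 3) (add_comm (u 0 * u 3) _ ▸ hF 4)
    (add_comm (u 0 ^ 2 * u 3) _ ▸ hF 5)
  have h₅ : u 5 ∈ F := by
    convert sub_mem (hF 3) (add_mem h₃ h₄) using 1
    simp only [tripleInvariants, Matrix.cons_val]
    ring
  rintro _ ⟨i, rfl⟩
  fin_cases i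
  exacts [h₀, h₁, h₂, h₃, h₄, h₅, hF 6, hF 7]

theorem rank_adjoin_tripleInvariants_le {u : Fin 8 → L} (hu : u.Injective)
    (h : cubicNorm (u 0) (u 1) (u 2) ≠ 0) :
    Module.rank (adjoin K (Set.range (tripleInvariants u))) L ≤
      3 * Module.rank (adjoin K (Set.range u)) L := by
  set E := adjoin K (Set.range (tripleInvariants u))
  have hE (i : Fin 8) : tripleInvariants u i ∈ E := subset_adjoin K _ ⟨i, rfl⟩
  have esymm_two_mem : u 0 * u 1 + u 1 * u 2 + u 2 * u 0 ∈ E := by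
    rw [esymm_two_eq_masudaQuot h]
    exact sub_mem (mul_mem (hE 0) (add_mem (hE 1) (hE 2)))
      (mul_mem (ofNat_mem E 3) (add_mem (sub_mem (pow_mem (hE 1) 2) (mul_mem (hE 1) (hE 2)))
        (pow_mem (hE 2) 2)))
  have esymm_three_mem : u 0 * u 1 * u 2 ∈ E := by
    rw [esymm_three_eq_masudaQuot h]
    exact sub_mem (mul_mem (hE 0) (mul_mem (hE 1) (hE 2)))
      (add_mem (pow_mem (hE 1) 3) (pow_mem (hE 2) 3))
  refine (rank_le_three_mul_rank_sup E _ _ _ (hE 0) esymm_two_mem esymm_three_mem).trans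
    (mul_le_mul_right (rank_anti (adjoin_le_iff.mpr ?_)) 3)
  have E_le : E ≤ E ⊔ K⟮u 0⟯ := le_sup_left
  exact range_subset_of_tripleInvariants_mem hu h (fun i => E_le (hE i)) (E_le esymm_two_mem)
    ((le_sup_right : K⟮u 0⟯ ≤ E ⊔ K⟮u 0⟯) (mem_adjoin_simple_self K (u 0)))

theorem cubicNorm_ne_zero_of_algebraicIndependent {ι : Type*} {u : ι → L}
    (hu : AlgebraicIndependent K u) {i j k : ι} (hij : i ≠ j) (hik : i ≠ k) :
    cubicNorm (u i) (u j) (u k) ≠ 0 := by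
  intro h
  have poly_eq_zero : cubicNorm (MvPolynomial.X i) (MvPolynomial.X j) (MvPolynomial.X k) =
      (0 : MvPolynomial ι K) :=
    (map_eq_zero_iff (MvPolynomial.aeval u) hu).mp (by simpa [cubicNorm] using h)
  classical
  simpa [cubicNorm, hij.symm, hik.symm] using
    congr_arg (MvPolynomial.eval (Pi.single i (1 : K))) poly_eq_zero

end CyclicCubic

section Criterion

open IntermediateField

/-- The generator `σ₁ = (1,2)(3,4)(5,6)(7,8)`, on letters numbered from `0`. -/
abbrev σ₁ : Equiv.Perm (Fin 8) :=
  Equiv.swap 0 1 * Equiv.swap 2 3 * Equiv.swap 4 5 * Equiv.swap 6 7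

/-- The generator `σ₂ = (1,3)(2,4)(5,7)(6,8)`, on letters numbered from `0`. -/
abbrev σ₂ : Equiv.Perm (Fin 8) :=
  Equiv.swap 0 2 * Equiv.swap 1 3 * Equiv.swap 4 6 * Equiv.swap 5 7

/-- The generator `κ = (1,5)(2,6)(3,7)(4,8)`, on letters numbered from `0`. -/
abbrev κ : Equiv.Perm (Fin 8) :=
  Equiv.swap 0 4 * Equiv.swap 1 5 * Equiv.swap 2 6 * Equiv.swap 3 7

/-- The generator `θ = (2,3,7,4,5,6,8)`, on letters numbered from `0`. -/
abbrev θ : Equiv.Perm (Fin 8) :=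
  Equiv.swap 1 2 * Equiv.swap 2 6 * Equiv.swap 6 3 * Equiv.swap 3 4 * Equiv.swap 4 5 *
    Equiv.swap 5 7

/-- The generator `φ₁ = (2,3,4)(7,6,5)`, on letters numbered from `0`. -/
abbrev φ₁ : Equiv.Perm (Fin 8) :=
  (Equiv.swap 1 2 * Equiv.swap 2 3) * (Equiv.swap 6 5 * Equiv.swap 5 4)

/-- The group `G_36`, the affine semilinear group of the line over the field with eight elements. -/
abbrev G36 : Subgroup (Equiv.Perm (Fin 8)) :=
  Subgroup.closure {σ₁, σ₂, κ, θ, φ₁}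

theorem exists_mem_G36_apply_zero (i : Fin 8) : ∃ σ ∈ G36, σ 0 = i := by
  have h₁ : σ₁ ∈ G36 := Subgroup.subset_closure (by simp)
  have h₂ : σ₂ ∈ G36 := Subgroup.subset_closure (by simp)
  have h₃ : κ ∈ G36 := Subgroup.subset_closure (by simp)
  fin_cases i
  · exact ⟨1, one_mem _, by decide⟩
  · exact ⟨σ₁, h₁, by decide⟩
  · exact ⟨σ₂, h₂, by decide⟩
  · exact ⟨σ₁ * σ₂, mul_mem h₁ h₂, by decide⟩
  · exact ⟨κ, h₃, by decide⟩
  · exact ⟨σ₁ * κ, mul_mem h₁ h₃, by decide⟩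
  · exact ⟨σ₂ * κ, mul_mem h₂ h₃, by decide⟩
  · exact ⟨σ₁ * σ₂ * κ, mul_mem (mul_mem h₁ h₂) h₃, by decide⟩

theorem eight_dvd_card_G36 : 8 ∣ Nat.card G36 := by
  have : MulAction.IsPretransitive G36 (Fin 8) := .of_orbit (x₀ := (0 : Fin 8)) fun i => by
    obtain ⟨σ, hσ, h⟩ := exists_mem_G36_apply_zero i
    exact ⟨⟨σ, hσ⟩, h⟩
  simpa [MulAction.index_stabilizer_of_transitive] using
    (MulAction.stabilizer G36 (0 : Fin 8)).index_dvd_card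

set_option maxRecDepth 10000 in
theorem card_G36_ge : 168 ≤ Nat.card G36 := by
  have seven_dvd : 7 ∣ Nat.card G36 := by
    rw [← orderOf_eq_prime (p := 7) (x := θ) (hp := ⟨by norm_num⟩) (by decide) (by decide)]
    exact Subgroup.orderOf_dvd_natCard _ (Subgroup.subset_closure (by simp))
  have three_dvd : 3 ∣ Nat.card G36 := by
    rw [← orderOf_eq_prime (p := 3) (x := φ₁) (by decide) (by decide)]
    exact Subgroup.orderOf_dvd_natCard _ (Subgroup.subset_closure (by simp))
  have dvd : 8 * 7 * 3 ∣ Nat.card G36 :=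
    Nat.Coprime.mul_dvd_of_dvd_of_dvd (by norm_num)
      (Nat.Coprime.mul_dvd_of_dvd_of_dvd (by norm_num) eight_dvd_card_G36 seven_dvd) three_dvd
  exact Nat.le_of_dvd Nat.card_pos dvd

theorem tripleInvariants_mem_fixedSub_G36 {K : Type} [Field K] {u : Fin 8 → RFF K (Fin 8)}
    (hσ : ∀ σ ∈ ({σ₁, σ₂, κ, θ} : Set (Equiv.Perm (Fin 8))), permHom K (Fin 8) σ ∘ u = u)
    (hφ₁ : permHom K (Fin 8) φ₁ ∘ u = u ∘ rotateTriples) (i : Fin 8) :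
    tripleInvariants u i ∈ fixedSub K (Fin 8) G36 := by
  have permHom_invariants (σ : Equiv.Perm (Fin 8)) :
      tripleInvariants (permHom K (Fin 8) σ ∘ u) = permHom K (Fin 8) σ ∘ tripleInvariants u :=
    tripleInvariants_map (permHom K (Fin 8) σ : RFF K (Fin 8) →+* RFF K (Fin 8)) u
  refine mem_fixedSub_closure fun σ hσ' => congr_fun (?_ : _ ∘ tripleInvariants u = _) i
  rw [← permHom_invariants]
  obtain hσ' | rfl : σ ∈ ({σ₁, σ₂, κ, θ} : Set (Equiv.Perm (Fin 8))) ∨ σ = φ₁ := by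
    simpa only [Set.mem_insert_iff, Set.mem_singleton_iff, or_assoc] using hσ'
  · rw [hσ σ hσ']
  · rw [hφ₁, tripleInvariants_rotateTriples]

theorem rank_adjoin_tripleInvariants_RFF_le {K : Type} [Field K] {u : Fin 8 → RFF K (Fin 8)} {n : ℕ}
    (hu : Module.rank (adjoin K (Set.range u)) (RFF K (Fin 8)) ≤ n) :
    Module.rank (adjoin K (Set.range (tripleInvariants u))) (RFF K (Fin 8)) ≤ 3 * n := by
  have : FiniteDimensional (adjoin K (Set.range u)) (RFF K (Fin 8)) :=
    Module.rank_lt_aleph0_iff.mp (hu.trans_lt Cardinal.natCast_lt_aleph0)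
  have indep : AlgebraicIndependent K u :=
    algebraicIndependent_of_finiteDimensional_adjoin (algebraicIndependent_Xvar K (Fin 8))
  calc _ ≤ 3 * Module.rank (adjoin K (Set.range u)) (RFF K (Fin 8)) :=
        rank_adjoin_tripleInvariants_le indep.injective
          (cubicNorm_ne_zero_of_algebraicIndependent indep (by decide) (by decide))
    _ ≤ 3 * n := mul_le_mul_right hu 3

/-- The factors `8`, `7` and `3` of the order of `G36` are accounted for separately: it suffices
to find eight functions over which `x₀, …, x₇` has degree at most `56`, fixed by the generators
other than `φ₁` and permuted by `φ₁`. These properties may be checked over an extension `K'`. -/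
theorem isRatExt_fixedSub_G36 (K K' : Type) [Field K] [Field K'] [Algebra K K']
    [FiniteDimensional K K'] (gen : ∀ {M : Type} [Field M], (Fin 8 → M) → Fin 8 → M)
    (gen_map : ∀ {M N : Type} [Field M] [Field N] (f : M →+* N) (x : Fin 8 → M),
      gen (f ∘ x) = f ∘ gen x)
    (gen_perm : ∀ σ ∈ ({σ₁, σ₂, κ, θ} : Set (Equiv.Perm (Fin 8))),
      gen (Xvar K' (Fin 8) ∘ σ) = gen (Xvar K' (Fin 8)))
    (gen_φ₁ : gen (Xvar K' (Fin 8) ∘ φ₁) = gen (Xvar K' (Fin 8)) ∘ rotateTriples)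
    (rank_le : Module.rank (adjoin K' (Set.range (gen (Xvar K' (Fin 8))))) (RFF K' (Fin 8)) ≤ 56) :
    IsRatExt K (fixedSub K (Fin 8) G36) := by
  set u := gen (Xvar K (Fin 8)) with hu
  let ι := RFF.map (algebraMap K K') (Fin 8)
  have map_u : ι ∘ u = gen (Xvar K' (Fin 8)) := by
    rw [hu, ← gen_map]
    exact congr_arg gen (funext (RFF.map_Xvar _))
  have map_permHom_u (σ : Equiv.Perm (Fin 8)) :
      ι ∘ permHom K (Fin 8) σ ∘ u = gen (Xvar K' (Fin 8) ∘ σ) := by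
    rw [hu, ← RingHom.coe_coe (permHom K (Fin 8) σ), ← gen_map, ← gen_map]
    refine congr_arg gen (funext fun i => ?_)
    simp only [Function.comp_apply, RingHom.coe_coe, permHom_Xvar, ι, RFF.map_Xvar]
  have of_map_comp {f g : Fin 8 → RFF K (Fin 8)} (h : ι ∘ f = ι ∘ g) : f = g :=
    ι.injective.comp_left h
  refine isRatExt_fixedSub_of_rank_le (f := tripleInvariants u)
    (tripleInvariants_mem_fixedSub_G36 (fun σ hσ => ?_) ?_) ?_
  · apply of_map_comp
    rw [map_permHom_u, gen_perm σ hσ, map_u]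
  · apply of_map_comp
    rw [map_permHom_u, gen_φ₁, ← map_u, Function.comp_assoc]
  · refine le_trans ?_ (Nat.cast_le.mpr card_G36_ge)
    apply RFF.rank_adjoin_le_of_baseChange (K' := K')
    rw [← Set.range_comp, ← tripleInvariants_map, map_u]
    exact_mod_cast rank_adjoin_tripleInvariants_RFF_le (n := 56) rank_le

end Criterion

section Walsh

open IntermediateField

/-- The value at `a` of the `i`-th nontrivial character of `𝔽₂³`. Elements of `𝔽₂³` are written in
binary, and the characters are numbered so that `θ` shifts and `φ₁` doubles their indices. -/
def walshSign (i : ZMod 7) (a : Fin 8) : ℤ :=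
  let b := (![4, 1, 7, 3, 2, 5, 6] : Fin 7 → ℕ) i &&& a
  if xor (b.testBit 0) (xor (b.testBit 1) (b.testBit 2)) then -1 else 1

section Ring

variable {M : Type*} [CommRing M] (x : Fin 8 → M)

/-- The nontrivial Walsh–Hadamard coefficients of `x`. -/
def walsh (i : ZMod 7) : M := ∑ a, (walshSign i a : M) * x a

/-- The basic invariants of the group of translations among the monomials in the Walsh–Hadamard
coefficients. The three characters in question have trivial product. -/
def walshTriple (i : ZMod 7) : M := walsh x (i + 3) * walsh x (i + 5) * walsh x (i + 6)

theorem map_walsh {N F : Type*} [CommRing N] [FunLike F M N] [RingHomClass F M N] (f : F)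
    (i : ZMod 7) : f (walsh x i) = walsh (fun a => f (x a)) i := by
  simp [walsh, map_sum]

theorem map_walshTriple {N F : Type*} [CommRing N] [FunLike F M N] [RingHomClass F M N] (f : F)
    (i : ZMod 7) : f (walshTriple x i) = walshTriple (fun a => f (x a)) i := by
  simp [walshTriple, map_walsh]

theorem walsh_comp_perm {σ : Equiv.Perm (Fin 8)} {i j : ZMod 7} {c : ℤ}
    (h : ∀ a, walshSign i a = c * walshSign j (σ a)) : walsh (x ∘ σ) i = c * walsh x j := by
  rw [walsh, walsh, ← Equiv.sum_comp σ fun a => (walshSign j a : M) * x a, Finset.mul_sum]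
  refine Finset.sum_congr rfl fun a _ => ?_
  rw [h a, Function.comp_apply]
  push_cast
  ring

theorem walsh_comp_translation {σ : Equiv.Perm (Fin 8)}
    (hσ : σ ∈ ({σ₁, σ₂, κ} : Set (Equiv.Perm (Fin 8)))) (i : ZMod 7) :
    walsh (x ∘ σ) i = walshSign i (σ 0) * walsh x i := by
  refine walsh_comp_perm x ?_
  revert i
  rcases hσ with rfl | rfl | rfl <;> decide

theorem walshTriple_comp_translation {σ : Equiv.Perm (Fin 8)}
    (hσ : σ ∈ ({σ₁, σ₂, κ} : Set (Equiv.Perm (Fin 8)))) :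
    walshTriple (x ∘ σ) = walshTriple x := by
  have sign_mul : ∀ i a, walshSign (i + 3) a * walshSign (i + 5) a * walshSign (i + 6) a = 1 := by
    decide
  funext i
  have sign_mul_cast := congr_arg (Int.cast : ℤ → M) (sign_mul i (σ 0))
  push_cast at sign_mul_cast
  simp only [walshTriple, walsh_comp_translation x hσ]
  linear_combination (walsh x (i + 3) * walsh x (i + 5) * walsh x (i + 6)) * sign_mul_cast

theorem prod_walsh_comp_translation {σ : Equiv.Perm (Fin 8)}
    (hσ : σ ∈ ({σ₁, σ₂, κ} : Set (Equiv.Perm (Fin 8)))) :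
    ∏ i, walsh (x ∘ σ) i = ∏ i, walsh x i := by
  have prod_sign : ∀ a, ∏ i, walshSign i a = 1 := by decide
  simp only [walsh_comp_translation x hσ, Finset.prod_mul_distrib]
  rw [← Int.cast_prod, prod_sign, Int.cast_one, one_mul]

theorem walsh_comp_θ (i : ZMod 7) : walsh (x ∘ θ) i = walsh x (i + 1) := by
  simpa using walsh_comp_perm x (σ := θ) (i := i) (j := i + 1) (c := 1) (by revert i; decide)

theorem walsh_comp_φ₁ (i : ZMod 7) : walsh (x ∘ φ₁) i = walsh x (2 * i) := by
  simpa using walsh_comp_perm x (σ := φ₁) (i := i) (j := 2 * i) (c := 1) (by revert i; decide)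

theorem walshTriple_comp_θ (i : ZMod 7) : walshTriple (x ∘ θ) i = walshTriple x (i + 1) := by
  simp only [walshTriple, walsh_comp_θ, add_right_comm]

theorem walshTriple_comp_φ₁ (i : ZMod 7) : walshTriple (x ∘ φ₁) i = walshTriple x (2 * i) := by
  simp only [walshTriple, walsh_comp_φ₁, mul_add]
  reduce_mod_char
  ring

theorem walshTriple_mul_walshTriple_mul_walshTriple (i : ZMod 7) :
    walshTriple x (i + 1) * walshTriple x (i + 2) * walshTriple x (i + 4) =
      walsh x i ^ 2 * ∏ j, walsh x j := by
  rw [← Equiv.prod_comp (Equiv.addLeft i) (walsh x)]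
  simp only [Equiv.coe_addLeft, walshTriple, add_assoc]
  reduce_mod_char
  have prod_eq (y : ZMod 7 → M) : ∏ j, y j = y 0 * y 1 * y 2 * y 3 * y 4 * y 5 * y 6 :=
    Fin.prod_univ_seven y
  rw [prod_eq]
  ring_nf

theorem prod_walshTriple : ∏ i, walshTriple x i = (∏ i, walsh x i) ^ 3 := by
  have prod_add (k : ZMod 7) : ∏ i, walsh x (i + k) = ∏ i, walsh x i :=
    Equiv.prod_comp (Equiv.addRight k) (walsh x)
  simp only [walshTriple, Finset.prod_mul_distrib, prod_add]
  ring

theorem eight_mul_eq_sum_add_sum_walsh (a : Fin 8) :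
    8 * x a = ∑ b, x b + ∑ i, (walshSign i a : M) * walsh x i := by
  have orthogonality : ∀ a b, (1 : ℤ) + ∑ i, walshSign i a * walshSign i b =
      if b = a then 8 else 0 := by decide
  calc 8 * x a = ∑ b, ((if b = a then 8 else 0 : ℤ) : M) * x b := by simp
    _ = ∑ b, (x b + ∑ i, (walshSign i a : M) * ((walshSign i b : M) * x b)) := by
      refine Finset.sum_congr rfl fun b _ => ?_
      rw [← orthogonality a b]
      push_cast
      rw [add_mul, one_mul, Finset.sum_mul]
      simp only [mul_assoc]
    _ = _ := by
      simp only [walsh, Finset.mul_sum]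
      rw [Finset.sum_add_distrib, Finset.sum_comm]

end Ring

section WalshRatio

variable {M : Type*} [Field M] (x : Fin 8 → M)

/-- A homogeneous invariant of `G36` of degree one. -/
def walshRatio : M := (∏ i, walsh x i) / (∑ i, walshTriple x i) ^ 2

theorem walshRatio_map {N : Type*} [Field N] (f : M →+* N) :
    walshRatio (f ∘ x) = f (walshRatio x) := by
  simp only [walshRatio, map_div₀, map_pow, map_prod, map_sum, map_walsh, map_walshTriple,
    Function.comp_def]

theorem walshRatio_comp {σ : Equiv.Perm (Fin 8)}
    (hσ : σ ∈ ({σ₁, σ₂, κ, θ, φ₁} : Set (Equiv.Perm (Fin 8)))) :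
    walshRatio (x ∘ σ) = walshRatio x := by
  obtain hσ | rfl | rfl : σ ∈ ({σ₁, σ₂, κ} : Set (Equiv.Perm (Fin 8))) ∨ σ = θ ∨ σ = φ₁ := by
    simpa only [Set.mem_insert_iff, Set.mem_singleton_iff, or_assoc] using hσ
  · simp only [walshRatio, prod_walsh_comp_translation x hσ, walshTriple_comp_translation x hσ]
  · have bijective_add_one : Function.Bijective fun i : ZMod 7 => i + 1 := by decide
    simp only [walshRatio, walsh_comp_θ, walshTriple_comp_θ]
    rw [bijective_add_one.prod_comp (walsh x), bijective_add_one.sum_comp (walshTriple x)]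
  · have bijective_two_mul : Function.Bijective fun i : ZMod 7 => 2 * i := by decide
    simp only [walshRatio, walsh_comp_φ₁, walshTriple_comp_φ₁]
    rw [bijective_two_mul.prod_comp (walsh x), bijective_two_mul.sum_comp (walshTriple x)]

end WalshRatio

section Nonvanishing

variable {K : Type} [Field K]

theorem walsh_Xvar_ne_zero (h2 : (2 : K) ≠ 0) (i : ZMod 7) : walsh (Xvar K (Fin 8)) i ≠ 0 := by
  have sum_sq : ∀ i, ∑ a, walshSign i a * walshSign i a = 2 ^ 3 := by decide
  have sum_sq_cast : ∑ a, (walshSign i a : K) * walshSign i a = 2 ^ 3 := by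
    exact_mod_cast congr_arg (Int.cast : ℤ → K) (sum_sq i)
  have eval_ne : MvPolynomial.eval (fun a => (walshSign i a : K)) (walsh MvPolynomial.X i) ≠ 0 := by
    simp only [map_walsh, MvPolynomial.eval_X]
    rw [walsh, sum_sq_cast]
    exact pow_ne_zero 3 h2
  simpa only [map_walsh, MvPolynomial.aeval_X] using aeval_Xvar_ne_zero eval_ne

theorem walshTriple_dirac (M : Type*) [CommRing M] (i : ZMod 7) :
    walshTriple (fun a => ((walshSign 3 a + walshSign 5 a + walshSign 6 a : ℤ) : M)) i =
      if i = 0 then 2 ^ 9 else 0 := by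
  have int_case : ∀ i, walshTriple (fun a => walshSign 3 a + walshSign 5 a + walshSign 6 a) i =
    if i = 0 then 2 ^ 9 else 0 := by decide
  refine (map_walshTriple _ (Int.castRingHom M) i).symm.trans ?_
  rw [int_case]
  split_ifs
  · rw [map_pow, map_ofNat]
  · exact map_zero _

theorem sum_mul_walshTriple_Xvar_ne_zero (h2 : (2 : K) ≠ 0) {c : ZMod 7 → K} (hc : c 0 ≠ 0) :
    ∑ i, algebraMap K (RFF K (Fin 8)) (c i) * walshTriple (Xvar K (Fin 8)) i ≠ 0 := by
  have eval_ne : MvPolynomial.eval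
      (fun a => ((walshSign 3 a + walshSign 5 a + walshSign 6 a : ℤ) : K))
      (∑ i, MvPolynomial.C (c i) * walshTriple MvPolynomial.X i) ≠ 0 := by
    simp only [map_sum, map_mul, MvPolynomial.eval_C, map_walshTriple, MvPolynomial.eval_X,
      walshTriple_dirac, mul_ite, mul_zero, Finset.sum_ite_eq', Finset.mem_univ, if_true]
    exact mul_ne_zero hc (pow_ne_zero 9 h2)
  simpa only [map_sum, map_mul, MvPolynomial.aeval_C, map_walshTriple, MvPolynomial.aeval_X]
    using aeval_Xvar_ne_zero eval_ne

theorem sum_walshTriple_Xvar_ne_zero (h2 : (2 : K) ≠ 0) :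
    ∑ i, walshTriple (Xvar K (Fin 8)) i ≠ 0 := by
  simpa using sum_mul_walshTriple_Xvar_ne_zero h2 (c := 1) one_ne_zero

end Nonvanishing

section Rank

variable {K L : Type*} [Field K] [Field L] [Algebra K L] {x : Fin 8 → L}

theorem walsh_add_five_mem {F : IntermediateField K L} (hy : ∀ i, walsh x i ≠ 0)
    (hz : ∀ i, walshTriple x i ∈ F) (i : ZMod 7) (hi : walsh x i ∈ F)
    (hi' : walsh x (i + 1) ∈ F) : walsh x (i + 5) ∈ F := by
  have eq_div : walsh x (i + 5) = walshTriple x (i + 2) / (walsh x i * walsh x (i + 1)) := by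
    rw [eq_div_iff (mul_ne_zero (hy _) (hy _)), walshTriple]
    simp only [add_assoc]
    reduce_mod_char
    ring
  rw [eq_div]
  exact div_mem (hz _) (mul_mem hi hi')

theorem walsh_mem {F : IntermediateField K L} (hy : ∀ i, walsh x i ≠ 0)
    (hz : ∀ i, walshTriple x i ∈ F) (h₀ : walsh x 0 ∈ F) (h₁ : walsh x 1 ∈ F)
    (h₂ : walsh x 2 ∈ F) (i : ZMod 7) : walsh x i ∈ F := by
  have h₅ : walsh x 5 ∈ F := walsh_add_five_mem hy hz 0 h₀ h₁
  have h₆ : walsh x 6 ∈ F := walsh_add_five_mem hy hz 1 h₁ h₂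
  have h₃ : walsh x 3 ∈ F := walsh_add_five_mem hy hz 5 h₅ h₆
  have h₄ : walsh x 4 ∈ F := walsh_add_five_mem hy hz 6 h₆ h₀
  change Fin 7 at i
  fin_cases i
  exacts [h₀, h₁, h₂, h₃, h₄, h₅, h₆]

theorem walsh_sq_mem {E : IntermediateField K L} (hy : ∀ i, walsh x i ≠ 0)
    (hs : ∑ i, walshTriple x i ≠ 0) (hz : ∀ i, walshTriple x i / ∑ j, walshTriple x j ∈ E)
    (hw : walshRatio x ∈ E) :
    (∀ i, walshTriple x i ∈ E) ∧ ∀ i, walsh x i ^ 2 ∈ E := by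
  set s := ∑ i, walshTriple x i
  set w := ∏ i, walsh x i
  have w_ne : w ≠ 0 := Finset.prod_ne_zero_iff.mpr fun i _ => hy i
  have prod_eq : ∏ i, walshTriple x i = w ^ 3 := prod_walshTriple x
  have s_mem : s ∈ E := by
    have s_eq : s = (w / s ^ 2) ^ 3 / ∏ i, (walshTriple x i / s) := by
      rw [Finset.prod_div_distrib, prod_eq, Finset.prod_const, Finset.card_univ,
        ZMod.card]
      field_simp
    rw [s_eq]
    exact div_mem (pow_mem hw 3) (prod_mem fun i _ => hz i)
  have triple_mem (i : ZMod 7) : walshTriple x i ∈ E :=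
    div_mul_cancel₀ (walshTriple x i) hs ▸ mul_mem (hz i) s_mem
  have w_mem : w ∈ E := div_mul_cancel₀ w (pow_ne_zero 2 hs) ▸ mul_mem hw (pow_mem s_mem 2)
  refine ⟨triple_mem, fun i => ?_⟩
  rw [eq_div_of_mul_eq w_ne (walshTriple_mul_walshTriple_mul_walshTriple x i).symm]
  exact div_mem (mul_mem (mul_mem (triple_mem _) (triple_mem _)) (triple_mem _)) w_mem

theorem eq_top_of_walsh_mem {F : IntermediateField K L} (hx : adjoin K (Set.range x) = ⊤)
    (h2 : (2 : L) ≠ 0) (ht : ∑ a, x a ∈ F) (hy : ∀ i, walsh x i ∈ F) : F = ⊤ := by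
  rw [eq_top_iff, ← hx, adjoin_le_iff]
  rintro _ ⟨a, rfl⟩
  have eight_ne : (8 : L) ≠ 0 := by
    rw [show (8 : L) = 2 ^ 3 by norm_num]
    exact pow_ne_zero 3 h2
  rw [eq_div_of_mul_eq eight_ne ((mul_comm _ _).trans (eight_mul_eq_sum_add_sum_walsh x a))]
  exact div_mem (add_mem ht (sum_mem fun i _ => mul_mem (intCast_mem F _) (hy i)))
    (ofNat_mem F 8)

theorem rank_le_eight_of_walshTriple_div_mem (E : IntermediateField K L)
    (hx : adjoin K (Set.range x) = ⊤) (h2 : (2 : L) ≠ 0) (hy : ∀ i, walsh x i ≠ 0)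
    (hs : ∑ i, walshTriple x i ≠ 0) (hz : ∀ i, walshTriple x i / ∑ j, walshTriple x j ∈ E)
    (hw : walshRatio x ∈ E) (ht : ∑ a, x a ∈ E) :
    Module.rank E L ≤ 8 := by
  obtain ⟨triple_mem, sq_mem⟩ := walsh_sq_mem hy hs hz hw
  set E₀ := E ⊔ K⟮walsh x 0⟯
  set E₁ := E₀ ⊔ K⟮walsh x 1⟯
  set E₂ := E₁ ⊔ K⟮walsh x 2⟯
  have le₀ : E ≤ E₀ := le_sup_left
  have le₁ : E₀ ≤ E₁ := le_sup_left
  have le₂ : E₁ ≤ E₂ := le_sup_left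
  have mem_sup (F : IntermediateField K L) (a : L) : a ∈ F ⊔ K⟮a⟯ :=
    (le_sup_right : K⟮a⟯ ≤ F ⊔ K⟮a⟯) (mem_adjoin_simple_self K a)
  have walsh_mem_E₂ : ∀ i, walsh x i ∈ E₂ :=
    walsh_mem hy (fun i => le₂ (le₁ (le₀ (triple_mem i)))) (le₂ (le₁ (mem_sup E _)))
      (le₂ (mem_sup E₀ _)) (mem_sup E₁ _)
  have E₂_eq_top : E₂ = ⊤ := eq_top_of_walsh_mem hx h2 (le₂ (le₁ (le₀ ht))) walsh_mem_E₂
  calc Module.rank E L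
    _ ≤ 2 * Module.rank E₀ L := rank_le_mul_rank_sup_of_pow_mem E two_ne_zero (sq_mem 0)
    _ ≤ 2 * (2 * Module.rank E₁ L) := by
      gcongr
      exact rank_le_mul_rank_sup_of_pow_mem E₀ two_ne_zero (le₀ (sq_mem 1))
    _ ≤ 2 * (2 * (2 * Module.rank E₂ L)) := by
      gcongr
      exact rank_le_mul_rank_sup_of_pow_mem E₁ two_ne_zero (le₁ (le₀ (sq_mem 2)))
    _ = 8 := by
      rw [E₂_eq_top, IntermediateField.rank_top]
      norm_num

end Rank

end Walsh

section Kummer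

open IntermediateField AddMonoidAlgebra

section GroupAlgebra

variable {M : Type*} [CommRing M]

theorem isUnit_zmod_seven {k : ZMod 7} (hk : k ≠ 0) : IsUnit k := by
  revert k
  decide

/-- The endomorphism of the group algebra of `ℤ/7` induced by multiplication by `e` on `ℤ/7`. -/
def dilate (e : ZMod 7) : M[ZMod 7] →+* M[ZMod 7] :=
  mapDomainRingHom M (AddMonoidHom.mulLeft e)

theorem dilate_single (e k : ZMod 7) (c : M) : dilate e (single k c) = single (e * k) c :=
  mapDomain_single

theorem dilate_dilate (d e : ZMod 7) (X : M[ZMod 7]) :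
    dilate d (dilate e X) = dilate (d * e) X := by
  induction X using AddMonoidAlgebra.induction_linear with
  | zero => simp only [map_zero]
  | add f g hf hg => simp only [map_add, hf, hg]
  | single k c => simp only [dilate_single, mul_assoc]

theorem dilate_one (X : M[ZMod 7]) : dilate 1 X = X := by
  induction X using AddMonoidAlgebra.induction_linear with
  | zero => simp only [map_zero]
  | add f g hf hg => simp only [map_add, hf, hg]
  | single k c => simp only [dilate_single, one_mul]

theorem coeff_dilate (d : (ZMod 7)ˣ) (X : M[ZMod 7]) (k : ZMod 7) :
    (dilate d X).coeff (d * k) = X.coeff k :=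
  Finsupp.mapDomain_apply d.isUnit.mul_right_injective X.coeff k

theorem mapRingHom_dilate {N : Type*} [CommRing N] (f : M →+* N) (e : ZMod 7) (X : M[ZMod 7]) :
    mapRingHom (ZMod 7) f (dilate e X) = dilate e (mapRingHom (ZMod 7) f X) :=
  RingHom.congr_fun (mapRingHom_comp_mapDomainRingHom f (AddMonoidHom.mulLeft e)) X

/-- The product of the conjugates of `X` under the dilations. -/
def dilationNorm (X : M[ZMod 7]) : M[ZMod 7] := ∏ d : (ZMod 7)ˣ, dilate d X

/-- The product of conjugates of `X` which is formally
`dilationNorm X * X * dilate 3 X / dilate 4 X`. The exponent `1 + 3 - 4` vanishes in `ℤ/7`, which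
makes it invariant under translation, and `1 + g - g ^ 4`, for `g` a generator of `(ℤ/7)ˣ`, has norm
`7` in the group ring of `(ℤ/7)ˣ`. -/
def kummerProd (X : M[ZMod 7]) : M[ZMod 7] :=
  X ^ 2 * dilate 3 X ^ 2 * dilate 2 X * dilate 5 X * dilate 6 X

theorem dilationNorm_eq (X : M[ZMod 7]) : dilationNorm X =
    X * dilate 2 X * dilate 3 X * dilate 4 X * dilate 5 X * dilate 6 X := by
  have univ_eq : (Finset.univ : Finset (ZMod 7)ˣ) = {⟨1, 1, by decide, by decide⟩,
      ⟨2, 4, by decide, by decide⟩, ⟨3, 5, by decide, by decide⟩, ⟨4, 2, by decide, by decide⟩,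
      ⟨5, 3, by decide, by decide⟩, ⟨6, 6, by decide, by decide⟩} := by decide
  rw [dilationNorm, univ_eq]
  repeat rw [Finset.prod_insert (by decide)]
  rw [Finset.prod_singleton, dilate_one]
  simp only [mul_assoc]

theorem kummerProd_mul_dilate (X : M[ZMod 7]) :
    kummerProd X * dilate 4 X = dilationNorm X * (X * dilate 3 X) := by
  rw [kummerProd, dilationNorm_eq]
  ring

theorem dilate_dilationNorm (d : (ZMod 7)ˣ) (X : M[ZMod 7]) :
    dilate d (dilationNorm X) = dilationNorm X := by
  simp only [dilationNorm, map_prod, dilate_dilate, ← Units.val_mul]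
  exact Equiv.prod_comp (Equiv.mulLeft d) fun e : (ZMod 7)ˣ => dilate (e : ZMod 7) X

theorem dilationNorm_dilate (d : (ZMod 7)ˣ) (X : M[ZMod 7]) :
    dilationNorm (dilate d X) = dilationNorm X := by
  simp only [dilationNorm, dilate_dilate, ← Units.val_mul]
  exact Equiv.prod_comp (Equiv.mulRight d) fun e : (ZMod 7)ˣ => dilate (e : ZMod 7) X

theorem kummerProd_dilate (e : ZMod 7) (X : M[ZMod 7]) :
    kummerProd (dilate e X) = dilate e (kummerProd X) := by
  simp only [kummerProd, map_mul, map_pow, dilate_dilate, mul_comm e]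

theorem dilationNorm_single_mul (a : ZMod 7) (X : M[ZMod 7]) :
    dilationNorm (single a 1 * X) = dilationNorm X := by
  have prod_single_eq : ∏ d : (ZMod 7)ˣ, single ((d : ZMod 7) * a) (1 : M) = 1 := by
    rw [prod_single, ← Finset.sum_mul, Finset.prod_const_one,
      show ∑ d : (ZMod 7)ˣ, (d : ZMod 7) = 0 by decide, zero_mul, one_def]
  simp only [dilationNorm, map_mul, dilate_single, Finset.prod_mul_distrib, prod_single_eq, one_mul]

theorem kummerProd_single_mul (a : ZMod 7) (X : M[ZMod 7]) :
    kummerProd (single a 1 * X) = kummerProd X := by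
  have single_mul_eq : (single a 1 ^ 2 * single (3 * a) 1 ^ 2 * single (2 * a) 1 *
      single (5 * a) 1 * single (6 * a) 1 : M[ZMod 7]) = 1 := by
    simp only [single_pow, single_mul_single, one_pow, mul_one, one_def]
    congr 1
    revert a
    decide
  simp only [kummerProd, map_mul, dilate_single]
  linear_combination (X ^ 2 * dilate 3 X ^ 2 * dilate 2 X * dilate 5 X * dilate 6 X) * single_mul_eq

theorem mapRingHom_dilationNorm {N : Type*} [CommRing N] (f : M →+* N) (X : M[ZMod 7]) :
    mapRingHom (ZMod 7) f (dilationNorm X) = dilationNorm (mapRingHom (ZMod 7) f X) := by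
  simp only [dilationNorm, map_prod, mapRingHom_dilate]

theorem mapRingHom_kummerProd {N : Type*} [CommRing N] (f : M →+* N) (X : M[ZMod 7]) :
    mapRingHom (ZMod 7) f (kummerProd X) = kummerProd (mapRingHom (ZMod 7) f X) := by
  simp only [kummerProd, map_mul, map_pow, mapRingHom_dilate]

/-- The evaluation at the character `ψ`. -/
def evalChar (ψ : AddChar (ZMod 7) M) : M[ZMod 7] →ₐ[M] M :=
  AddMonoidAlgebra.lift M M (ZMod 7) ψ.toMonoidHom

theorem evalChar_dilate (ψ : AddChar (ZMod 7) M) (j : ZMod 7) (X : M[ZMod 7]) :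
    evalChar ψ (dilate j X) = ∑ k, X.coeff k * ψ (j * k) := by
  induction X using AddMonoidAlgebra.induction_linear with
  | zero => simp
  | add f g hf hg => simp [hf, hg, add_mul, Finset.sum_add_distrib]
  | single k c =>
    rw [dilate_single, evalChar, lift_single]
    simp [Finsupp.single_apply]

variable [IsDomain M]

theorem seven_mul_coeff {ψ : AddChar (ZMod 7) M} (hψ : ψ.IsPrimitive) (X : M[ZMod 7])
    (k : ZMod 7) : 7 * X.coeff k = ∑ j, ψ (j * -k) * evalChar ψ (dilate j X) := by
  calc 7 * X.coeff k = ∑ i, X.coeff i * ∑ j, ψ (j * (i - k)) := by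
        simp [AddChar.sum_mulShift _ hψ, sub_eq_zero, mul_comm]
    _ = ∑ j, ∑ i, X.coeff i * ψ (j * (i - k)) := by
        simp only [Finset.mul_sum]
        exact Finset.sum_comm
    _ = _ := by
        simp only [evalChar_dilate, Finset.mul_sum, sub_eq_add_neg, mul_add, AddChar.map_add_eq_mul]
        refine Finset.sum_congr rfl fun j _ => Finset.sum_congr rfl fun i _ => by ring

theorem evalChar_dilationNorm {ψ : AddChar (ZMod 7) M} (hψ : ψ.IsPrimitive) (X : M[ZMod 7]) :
    evalChar ψ (dilationNorm X) = (dilationNorm X).coeff 0 - (dilationNorm X).coeff 1 := by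
  set c := (dilationNorm X).coeff
  have coeff_const (k : ZMod 7) (hk : k ≠ 0) : c k = c 1 := by
    obtain ⟨d, rfl⟩ := isUnit_zmod_seven hk
    simpa [dilate_dilationNorm] using coeff_dilate d (dilationNorm X) 1
  have sum_ψ : ∑ k, ψ k = 0 := by
    simpa [show (1 : ZMod 7) ≠ 0 by decide] using AddChar.sum_mulShift 1 hψ
  calc evalChar ψ (dilationNorm X) = ∑ k, c k * ψ k := by
        simpa [dilate_one] using evalChar_dilate ψ 1 (dilationNorm X)
    _ = ∑ k, ((if k = 0 then c 0 - c 1 else 0) + c 1 * ψ k) := by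
        refine Finset.sum_congr rfl fun k _ => ?_
        split_ifs with hk
        · simp [hk]
        · rw [coeff_const k hk, zero_add]
    _ = c 0 - c 1 := by
        simp [Finset.sum_add_distrib, ← Finset.mul_sum, sum_ψ]

end GroupAlgebra

section Invariants

variable {M : Type*} [Field M]

/-- The coefficients of `kummerProd X`, normalized to be homogeneous of degree `0` and to vanish
at `0`. By `evalChar_dilationNorm`, the denominator is a product of Fourier coefficients. -/
def kummerCoeff (X : M[ZMod 7]) (k : ZMod 7) : M :=
  ((kummerProd X).coeff k - (kummerProd X).coeff 0) /
    (((dilationNorm X).coeff 0 - (dilationNorm X).coeff 1) * ∑ j, X.coeff j)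

theorem kummerCoeff_map {N : Type*} [Field N] (f : M →+* N) (X : M[ZMod 7]) (k : ZMod 7) :
    kummerCoeff (mapRingHom (ZMod 7) f X) k = f (kummerCoeff X k) := by
  simp only [kummerCoeff, ← mapRingHom_kummerProd, ← mapRingHom_dilationNorm, coeff_mapRingHom,
    map_div₀, map_sub, map_mul, map_sum]

theorem kummerCoeff_single_mul (a : ZMod 7) (X : M[ZMod 7]) (k : ZMod 7) :
    kummerCoeff (single a 1 * X) k = kummerCoeff X k := by
  have sum_eq : ∑ j, (single a 1 * X).coeff j = ∑ j, X.coeff j := by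
    simp only [coeff_single_mul_apply, one_mul]
    exact Equiv.sum_comp (Equiv.addLeft (-a)) X.coeff
  simp only [kummerCoeff, kummerProd_single_mul, dilationNorm_single_mul, sum_eq]

theorem kummerCoeff_dilate (d : (ZMod 7)ˣ) (X : M[ZMod 7]) (k : ZMod 7) :
    kummerCoeff (dilate d X) (d * k) = kummerCoeff X k := by
  have sum_eq : ∑ j, (dilate d X).coeff j = ∑ j, X.coeff j := by
    rw [← Equiv.sum_comp d.mulLeft]
    exact Finset.sum_congr rfl fun j _ => coeff_dilate d X j
  have coeff_zero (Y : M[ZMod 7]) : (dilate d Y).coeff 0 = Y.coeff 0 := by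
    simpa using coeff_dilate d Y 0
  simp only [kummerCoeff, kummerProd_dilate, dilationNorm_dilate, coeff_dilate, coeff_zero, sum_eq]

theorem sum_kummerCoeff_mul {ψ : AddChar (ZMod 7) M} (hψ : ψ.IsPrimitive) {X : M[ZMod 7]}
    (hX : ∀ j, evalChar ψ (dilate j X) ≠ 0) {j : ZMod 7} (hj : IsUnit j) :
    ∑ k, kummerCoeff X k * ψ (j * k) =
      evalChar ψ (dilate j X) * evalChar ψ (dilate (3 * j) X) /
        (evalChar ψ (dilate (4 * j) X) * ∑ k, X.coeff k) := by
  have norm_ne : evalChar ψ (dilationNorm X) ≠ 0 := by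
    rw [dilationNorm, map_prod]
    exact Finset.prod_ne_zero_iff.mpr fun d _ => hX d
  have evalChar_kummerProd : evalChar ψ (dilate j (kummerProd X)) * evalChar ψ (dilate (4 * j) X) =
      evalChar ψ (dilationNorm X) * (evalChar ψ (dilate j X) * evalChar ψ (dilate (3 * j) X)) := by
    obtain ⟨d, rfl⟩ := hj
    simpa only [Function.comp_apply, map_mul, dilate_dilate, mul_comm (d : ZMod 7),
      dilate_dilationNorm d] using congr_arg (evalChar ψ ∘ dilate d) (kummerProd_mul_dilate X)
  have sum_ψ : ∑ k, ψ (j * k) = 0 := by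
    have j_ne : j ≠ 0 := by
      rintro rfl
      exact absurd hj (by decide)
    simpa [j_ne, mul_comm j] using AddChar.sum_mulShift j hψ
  calc ∑ k, kummerCoeff X k * ψ (j * k)
    _ = (evalChar ψ (dilate j (kummerProd X)) - (kummerProd X).coeff 0 * ∑ k, ψ (j * k)) /
        (evalChar ψ (dilationNorm X) * ∑ k, X.coeff k) := by
      rw [evalChar_dilate, evalChar_dilationNorm hψ, Finset.mul_sum, ← Finset.sum_sub_distrib,
        Finset.sum_div]
      refine Finset.sum_congr rfl fun k _ => ?_
      rw [kummerCoeff]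
      ring
    _ = _ := by
      rw [sum_ψ, mul_zero, sub_zero, eq_div_of_mul_eq (hX _) evalChar_kummerProd]
      field_simp

end Invariants

section Rank

variable {K L : Type*} [Field K] [Field L] [Algebra K L]

theorem pow_seven_mem_of_mul_div_mem {E : IntermediateField K L} {ν : ZMod 7 → L}
    (hν : ∀ j, ν j ≠ 0) (h : ∀ j, IsUnit j → ν j * ν (3 * j) / ν (4 * j) ∈ E) : ν 1 ^ 7 ∈ E := by
  have ν_pow_eq : ν 1 ^ 7 = (ν 1 * ν 3 / ν 4) ^ 3 * (ν 3 * ν 2 / ν 5) * (ν 6 * ν 4 / ν 3) ^ 4 *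
      (ν 5 * ν 1 / ν 6) ^ 2 / ((ν 2 * ν 6 / ν 1) ^ 2 * (ν 4 * ν 5 / ν 2)) := by
    have h₁ := hν 1
    have h₂ := hν 2
    have h₃ := hν 3
    have h₄ := hν 4
    have h₅ := hν 5
    have h₆ := hν 6
    field_simp
  rw [ν_pow_eq]
  exact div_mem (mul_mem (mul_mem (mul_mem (pow_mem (h 1 (by decide)) 3) (h 3 (by decide)))
    (pow_mem (h 6 (by decide)) 4)) (pow_mem (h 5 (by decide)) 2))
    (mul_mem (pow_mem (h 2 (by decide)) 2) (h 4 (by decide)))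

theorem apply_three_mem_of_mul_div_mem {F : IntermediateField K L} {ν : ZMod 7 → L}
    (hν : ∀ j, ν j ≠ 0) (h : ∀ j, IsUnit j → ν j * ν (3 * j) / ν (4 * j) ∈ F) (h₁ : ν 1 ∈ F) :
    ν 3 ∈ F := by
  have ν_three_eq : ν 3 = ν 1 ^ 3 * (ν 2 * ν 6 / ν 1) * (ν 4 * ν 5 / ν 2) /
      (ν 1 * ν 3 / ν 4 * (ν 6 * ν 4 / ν 3) ^ 2 * (ν 5 * ν 1 / ν 6)) := by
    have h₁ := hν 1
    have h₂ := hν 2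
    have h₃ := hν 3
    have h₄ := hν 4
    have h₅ := hν 5
    have h₆ := hν 6
    field_simp
  rw [ν_three_eq]
  exact div_mem (mul_mem (mul_mem (pow_mem h₁ 3) (h 2 (by decide))) (h 4 (by decide)))
    (mul_mem (mul_mem (h 1 (by decide)) (pow_mem (h 6 (by decide)) 2)) (h 5 (by decide)))

theorem mem_of_mul_div_mem {F : IntermediateField K L} {ν : ZMod 7 → L} (hν : ∀ j, ν j ≠ 0)
    (h : ∀ j, IsUnit j → ν j * ν (3 * j) / ν (4 * j) ∈ F) (h₁ : ν 1 ∈ F) {j : ZMod 7}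
    (hj : IsUnit j) : ν j ∈ F := by
  have three_pow_mem (n : ℕ) : ν (3 ^ n) ∈ F := by
    induction n with
    | zero => rwa [pow_zero]
    | succ n ih =>
      have isUnit_three_pow : IsUnit ((3 : ZMod 7) ^ n) := .pow n (by decide)
      rw [pow_succ']
      refine apply_three_mem_of_mul_div_mem (ν := fun k => ν (k * 3 ^ n)) (fun k => hν _)
        (fun k hk => ?_) ((one_mul ((3 : ZMod 7) ^ n)).symm ▸ ih)
      simpa only [mul_assoc] using h (k * 3 ^ n) (hk.mul isUnit_three_pow)
  obtain ⟨n, rfl⟩ : ∃ n : Fin 6, (3 : ZMod 7) ^ (n : ℕ) = j := by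
    revert j
    decide
  exact three_pow_mem n

theorem exists_pow_seven_mem_of_kummerCoeff_mem {E : IntermediateField K L} (h7 : (7 : L) ≠ 0)
    {ψ : AddChar (ZMod 7) L} (hψ : ψ.IsPrimitive) (hψE : ∀ k, ψ k ∈ E) {X : L[ZMod 7]}
    (hX : ∀ j, evalChar ψ (dilate j X) ≠ 0) (hs : ∑ k, X.coeff k ≠ 0)
    (hr : ∀ k, kummerCoeff X k ∈ E) :
    ∃ a, a ^ 7 ∈ E ∧ ∀ k, X.coeff k / ∑ j, X.coeff j ∈ E ⊔ K⟮a⟯ := by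
  set ν : ZMod 7 → L := fun j => evalChar ψ (dilate j X) / ∑ k, X.coeff k with ν_def
  have ν_ne (j : ZMod 7) : ν j ≠ 0 := div_ne_zero (hX j) hs
  have ν_zero : ν 0 = 1 := by
    simp only [ν_def, evalChar_dilate, zero_mul, AddChar.map_zero_eq_one, mul_one, div_self hs]
  have ν_ratio_mem (j : ZMod 7) (hj : IsUnit j) : ν j * ν (3 * j) / ν (4 * j) ∈ E := by
    have ratio_eq : ν j * ν (3 * j) / ν (4 * j) = ∑ k, kummerCoeff X k * ψ (j * k) := by
      rw [sum_kummerCoeff_mul hψ hX hj, ν_def]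
      field_simp
    rw [ratio_eq]
    exact sum_mem fun k _ => mul_mem (hr k) (hψE _)
  have le_sup : E ≤ E ⊔ K⟮ν 1⟯ := le_sup_left
  have ν_mem (j : ZMod 7) : ν j ∈ E ⊔ K⟮ν 1⟯ := by
    by_cases hj : j = 0
    · rw [hj, ν_zero]
      exact one_mem _
    · exact mem_of_mul_div_mem ν_ne (fun j hj => le_sup (ν_ratio_mem j hj))
        ((le_sup_right : K⟮ν 1⟯ ≤ E ⊔ K⟮ν 1⟯) (mem_adjoin_simple_self K _)) (isUnit_zmod_seven hj)
  refine ⟨ν 1, pow_seven_mem_of_mul_div_mem ν_ne ν_ratio_mem, fun k => ?_⟩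
  have inversion : X.coeff k / ∑ j, X.coeff j = (∑ j, ψ (j * -k) * ν j) / 7 := by
    rw [eq_div_of_mul_eq h7 ((mul_comm _ _).trans (seven_mul_coeff hψ X k)), div_right_comm,
      Finset.sum_div]
    simp only [ν_def, mul_div_assoc]
  rw [inversion]
  exact div_mem (sum_mem fun j _ => mul_mem (le_sup (hψE _)) (ν_mem j)) (ofNat_mem _ 7)

end Rank

section Case

/-- The element of the group algebra of `ℤ/7` with coefficients `walshTriple x`. -/
def walshTripleElt {M : Type*} [CommRing M] (x : Fin 8 → M) : M[ZMod 7] :=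
  .ofCoeff (Finsupp.equivFunOnFinite.symm (walshTriple x))

theorem mapRingHom_walshTripleElt {M N : Type*} [CommRing M] [CommRing N] (f : M →+* N)
    (x : Fin 8 → M) : mapRingHom (ZMod 7) f (walshTripleElt x) = walshTripleElt (f ∘ x) := by
  ext k
  rw [coeff_mapRingHom]
  exact map_walshTriple x f k

theorem walshTripleElt_comp_θ {M : Type*} [CommRing M] (x : Fin 8 → M) :
    walshTripleElt (x ∘ θ) = single (-1) 1 * walshTripleElt x := by
  ext k
  rw [coeff_single_mul_apply, neg_neg, one_mul, add_comm]
  exact walshTriple_comp_θ x k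

theorem dilate_walshTripleElt_comp_φ₁ {M : Type*} [CommRing M] (x : Fin 8 → M) {d : (ZMod 7)ˣ}
    (hd : (d : ZMod 7) = 2) : dilate d (walshTripleElt (x ∘ φ₁)) = walshTripleElt x := by
  ext k
  obtain ⟨k, rfl⟩ : ∃ i : ZMod 7, d * i = k := ⟨d⁻¹ * k, d.mul_inv_cancel_left k⟩
  rw [coeff_dilate, hd]
  exact walshTriple_comp_φ₁ x k

/-- The functions of `x` used away from the characteristics `2` and `7`. -/
def kummerGen {M : Type*} [Field M] (x : Fin 8 → M) : Fin 8 → M :=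
  let r := kummerCoeff (walshTripleElt x)
  ![r 1, r 2, r 4, r 3, r 6, r 5, walshRatio x, ∑ a, x a]

theorem kummerGen_map {M N : Type*} [Field M] [Field N] (f : M →+* N) (x : Fin 8 → M) :
    kummerGen (f ∘ x) = f ∘ kummerGen x := by
  simp only [kummerGen, ← mapRingHom_walshTripleElt, kummerCoeff_map, walshRatio_map]
  funext i
  fin_cases i <;> simp

theorem kummerGen_comp {M : Type*} [Field M] (x : Fin 8 → M) {σ : Equiv.Perm (Fin 8)}
    (hσ : σ ∈ ({σ₁, σ₂, κ, θ} : Set (Equiv.Perm (Fin 8)))) : kummerGen (x ∘ σ) = kummerGen x := by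
  have kummerCoeff_eq :
      kummerCoeff (walshTripleElt (x ∘ σ)) = kummerCoeff (walshTripleElt x) := by
    obtain hσ | rfl : σ ∈ ({σ₁, σ₂, κ} : Set (Equiv.Perm (Fin 8))) ∨ σ = θ := by
      simpa only [Set.mem_insert_iff, Set.mem_singleton_iff, or_assoc] using hσ
    · simp only [walshTripleElt, walshTriple_comp_translation x hσ]
    · rw [walshTripleElt_comp_θ]
      exact funext (kummerCoeff_single_mul _ _)
  have ratio_eq : walshRatio (x ∘ σ) = walshRatio x := walshRatio_comp x (by grind)
  have sum_eq : ∑ a, (x ∘ σ) a = ∑ a, x a := Equiv.sum_comp σ x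
  simp only [kummerGen, kummerCoeff_eq, ratio_eq, sum_eq]

theorem kummerGen_comp_φ₁ {M : Type*} [Field M] (x : Fin 8 → M) :
    kummerGen (x ∘ φ₁) = kummerGen x ∘ rotateTriples := by
  have kummerCoeff_eq (k : ZMod 7) :
      kummerCoeff (walshTripleElt (x ∘ φ₁)) k = kummerCoeff (walshTripleElt x) (2 * k) := by
    obtain ⟨d, hd⟩ : IsUnit (2 : ZMod 7) := isUnit_zmod_seven (by decide)
    rw [← dilate_walshTripleElt_comp_φ₁ x hd, ← hd, kummerCoeff_dilate]
  have ratio_eq : walshRatio (x ∘ φ₁) = walshRatio x := walshRatio_comp x (by simp)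
  have sum_eq : ∑ a, (x ∘ φ₁) a = ∑ a, x a := Equiv.sum_comp φ₁ x
  simp only [kummerGen, kummerCoeff_eq, ratio_eq, sum_eq]
  funext i
  have doubling : (2 : ZMod 7) * 2 = 4 ∧ (2 : ZMod 7) * 4 = 1 ∧ (2 : ZMod 7) * 3 = 6 ∧
      (2 : ZMod 7) * 6 = 5 ∧ (2 : ZMod 7) * 5 = 3 := by decide
  fin_cases i <;> simp [rotateTriples, doubling]

theorem rank_adjoin_kummerGen_le {K L : Type*} [Field K] [Field L] [Algebra K L] {x : Fin 8 → L}
    (hx : adjoin K (Set.range x) = ⊤) (h2 : (2 : L) ≠ 0) (h7 : (7 : L) ≠ 0)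
    (hy : ∀ i, walsh x i ≠ 0) (hs : ∑ i, walshTriple x i ≠ 0)
    {ψ : AddChar (ZMod 7) K} (hψ : ψ.IsPrimitive)
    (hz : ∀ j, ∑ k, algebraMap K L (ψ (j * k)) * walshTriple x k ≠ 0) :
    Module.rank (adjoin K (Set.range (kummerGen x))) L ≤ 56 := by
  set E := adjoin K (Set.range (kummerGen x))
  have hE (i : Fin 8) : kummerGen x i ∈ E := subset_adjoin K _ ⟨i, rfl⟩
  have kummerCoeff_mem (k : ZMod 7) : kummerCoeff (walshTripleElt x) k ∈ E := by
    have kummerCoeff_zero : kummerCoeff (walshTripleElt x) 0 = 0 := by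
      rw [kummerCoeff, sub_self, zero_div]
    change Fin 7 at k
    fin_cases k
    exacts [kummerCoeff_zero ▸ zero_mem E, hE 0, hE 1, hE 3, hE 2, hE 5, hE 4]
  obtain ⟨a, a_pow_mem, triple_div_mem⟩ := exists_pow_seven_mem_of_kummerCoeff_mem h7
    (ψ := (algebraMap K L : K →* L).compAddChar ψ)
    (hψ.compMulHom_of_isPrimitive (algebraMap K L).injective)
    (fun k => E.algebraMap_mem _) (X := walshTripleElt x)
    (fun j => by simpa [evalChar_dilate, mul_comm, walshTripleElt] using hz j) hs kummerCoeff_mem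
  have le_sup : E ≤ E ⊔ K⟮a⟯ := le_sup_left
  calc Module.rank E L
    _ ≤ 7 * Module.rank ↥(E ⊔ K⟮a⟯) L := rank_le_mul_rank_sup_of_pow_mem E (by norm_num) a_pow_mem
    _ ≤ 7 * 8 := by
      gcongr
      exact rank_le_eight_of_walshTriple_div_mem _ hx h2 hy hs triple_div_mem (le_sup (hE 6))
        (le_sup (hE 7))
    _ = 56 := by norm_num

theorem isRatExt_fixedSub_G36_of_fourteen_ne_zero (K : Type) [Field K] (h2 : (2 : K) ≠ 0)
    (h7 : (7 : K) ≠ 0) : IsRatExt K (fixedSub K (Fin 8) G36) := by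
  have : NeZero ((7 : ℕ) : K) := ⟨h7⟩
  let K' := CyclotomicField 7 K
  have : FiniteDimensional K K' := IsCyclotomicExtension.finiteDimensional {7} K K'
  have zeta_spec := IsCyclotomicExtension.zeta_spec 7 K K'
  have two_ne_zero' (L : Type) [Field L] [Algebra K L] : (2 : L) ≠ 0 :=
    map_ofNat (algebraMap K L) 2 ▸ (map_ne_zero _).mpr h2
  have seven_ne_zero (L : Type) [Field L] [Algebra K L] : (7 : L) ≠ 0 :=
    map_ofNat (algebraMap K L) 7 ▸ (map_ne_zero _).mpr h7
  refine isRatExt_fixedSub_G36 K K' kummerGen kummerGen_map (fun σ hσ => kummerGen_comp _ hσ)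
    (kummerGen_comp_φ₁ _) ?_
  refine rank_adjoin_kummerGen_le (adjoin_range_Xvar K' (Fin 8)) (two_ne_zero' _)
    (seven_ne_zero _) (walsh_Xvar_ne_zero (two_ne_zero' K'))
    (sum_walshTriple_Xvar_ne_zero (two_ne_zero' K'))
    (AddChar.zmodChar_primitive_of_primitive_root 7 zeta_spec) fun j => ?_
  refine sum_mul_walshTriple_Xvar_ne_zero (two_ne_zero' K') ?_
  rw [mul_zero, AddChar.map_zero_eq_one]
  exact one_ne_zero

end Case

end Kummer

section ArtinSchreier

open IntermediateField

section Moments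

variable {p : ℕ} [NeZero p] {M : Type*} [Field M] (u : ZMod p → M)

/-- The mean of the distribution `u` on `ℤ/p`. -/
def zmodMean : M := ∑ i, i.cast * u i

/-- The central moments of the distribution `u` on `ℤ/p`. -/
def zmodMoment (k : ℕ) : M := ∑ i, (i.cast - zmodMean u) ^ k * u i

theorem map_zmod_cast {N : Type*} [Field N] (f : M →+* N) (i : ZMod p) :
    f i.cast = i.cast := by
  rw [← ZMod.natCast_val, ← ZMod.natCast_val, map_natCast]

theorem zmodMean_map {N : Type*} [Field N] (f : M →+* N) :
    zmodMean (f ∘ u) = f (zmodMean u) := by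
  simp only [zmodMean, map_sum, map_mul, map_zmod_cast, Function.comp_apply]

theorem zmodMoment_map {N : Type*} [Field N] (f : M →+* N) (k : ℕ) :
    zmodMoment (f ∘ u) k = f (zmodMoment u k) := by
  simp only [zmodMoment, zmodMean_map, map_sum, map_mul, map_pow, map_sub, map_zmod_cast,
    Function.comp_apply]

variable {u}

theorem zmodMoment_zero (hu : ∑ i, u i = 1) : zmodMoment u 0 = 1 := by
  simpa only [zmodMoment, pow_zero, one_mul] using hu

theorem zmodMoment_one (hu : ∑ i, u i = 1) : zmodMoment u 1 = 0 := by
  simp only [zmodMoment, pow_one, sub_mul, Finset.sum_sub_distrib, ← Finset.mul_sum, hu, mul_one]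
  exact sub_self _

variable [CharP M p]

theorem zmodMean_comp_add_right (hu : ∑ i, u i = 1) (c : ZMod p) :
    zmodMean (fun i => u (i + c)) = zmodMean u - c.cast := by
  calc zmodMean (fun i => u (i + c)) = ∑ i : ZMod p, ((i + c).cast - c.cast) * u (i + c) := by
        simp only [zmodMean, ZMod.cast_add', add_sub_cancel_right]
    _ = ∑ j, (j.cast - c.cast) * u j :=
        Equiv.sum_comp (Equiv.addRight c) fun j : ZMod p => (j.cast - c.cast : M) * u j
    _ = zmodMean u - c.cast := by
        simp only [sub_mul, Finset.sum_sub_distrib, ← Finset.mul_sum, hu, mul_one, zmodMean]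

theorem zmodMoment_comp_add_right (hu : ∑ i, u i = 1) (c : ZMod p) (k : ℕ) :
    zmodMoment (fun i => u (i + c)) k = zmodMoment u k := by
  rw [zmodMoment, zmodMean_comp_add_right hu, zmodMoment, ← Equiv.sum_comp (Equiv.addRight c)
    fun i => (i.cast - zmodMean u) ^ k * u i]
  simp only [Equiv.coe_addRight, ZMod.cast_add']
  exact Finset.sum_congr rfl fun i _ => by ring

variable (u)

theorem zmodMean_comp_mul_left {d e : ZMod p} (h : e * d = 1) :
    zmodMean (fun i => u (d * i)) = e.cast * zmodMean u := by
  have bijective_mul : Function.Bijective (d * · : ZMod p → ZMod p) :=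
    IsUnit.isUnit_iff_mulLeft_bijective.mp (isUnit_iff_exists_inv'.mpr ⟨e, h⟩)
  rw [zmodMean, zmodMean, Finset.mul_sum,
    ← bijective_mul.sum_comp fun i => e.cast * (i.cast * u i)]
  simp only [← mul_assoc, ← ZMod.cast_mul', h, one_mul]

theorem zmodMoment_comp_mul_left {d e : ZMod p} (h : e * d = 1) (k : ℕ) :
    zmodMoment (fun i => u (d * i)) k = e.cast ^ k * zmodMoment u k := by
  have bijective_mul : Function.Bijective (d * · : ZMod p → ZMod p) :=
    IsUnit.isUnit_iff_mulLeft_bijective.mp (isUnit_iff_exists_inv'.mpr ⟨e, h⟩)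
  rw [zmodMoment, zmodMoment, zmodMean_comp_mul_left u h, Finset.mul_sum,
    ← bijective_mul.sum_comp fun i => e.cast ^ k * ((i.cast - zmodMean u) ^ k * u i)]
  simp only [← mul_assoc, ← mul_pow, mul_sub, ← ZMod.cast_mul', h, one_mul]

end Moments

section Prime

variable {p : ℕ} [Fact p.Prime] {M : Type*} [Field M] [CharP M p]

theorem artinSchreier_sub_cast (ω : M) (c : ZMod p) :
    (ω - c.cast) ^ p - (ω - c.cast) = ω ^ p - ω := by
  rw [sub_pow_char, ← ZMod.cast_pow', ZMod.pow_card]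
  ring

theorem artinSchreier_cast_mul (ω : M) (c : ZMod p) :
    (c.cast * ω) ^ p - c.cast * ω = c.cast * (ω ^ p - ω) := by
  rw [mul_pow, ← ZMod.cast_pow', ZMod.pow_card, mul_sub]

/-- The indicator function of `b` is `1 - (i - b) ^ (p - 1)`. -/
theorem eq_one_sub_sum_zmodMoment {u : ZMod p → M} (hu : ∑ i, u i = 1) (b : ZMod p) :
    u b = 1 - ∑ k ∈ Finset.range (p - 1 + 1),
      zmodMoment u k * (zmodMean u - b.cast) ^ (p - 1 - k) * (p - 1).choose k := by
  have pow_eq (i : ZMod p) : ((i.cast - b.cast : M)) ^ (p - 1) = 1 - if i = b then 1 else 0 := by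
    rw [← ZMod.cast_sub', ← ZMod.cast_pow']
    split_ifs with h
    · simp [h, (Nat.sub_pos_of_lt (Fact.out : p.Prime).one_lt).ne']
    · simp [ZMod.pow_card_sub_one_eq_one (sub_ne_zero.mpr h)]
  calc u b = 1 - ∑ i, (i.cast - b.cast) ^ (p - 1) * u i := by
        simp [pow_eq, sub_mul, hu]
    _ = 1 - ∑ i, ((i.cast - zmodMean u) + (zmodMean u - b.cast)) ^ (p - 1) * u i := by
        simp only [sub_add_sub_cancel]
    _ = _ := by
        simp only [add_pow, zmodMoment, Finset.sum_mul]
        rw [Finset.sum_comm]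
        exact congr_arg _ (Finset.sum_congr rfl fun k _ => Finset.sum_congr rfl fun i _ => by ring)

end Prime

section Case

instance fact_prime_seven : Fact (Nat.Prime 7) := ⟨by norm_num⟩

/-- The distribution on `ℤ/7` with weights proportional to `walshTriple x`. -/
def walshWeight {M : Type*} [Field M] (x : Fin 8 → M) (i : ZMod 7) : M :=
  walshTriple x i / ∑ j, walshTriple x j

theorem sum_walshWeight {M : Type*} [Field M] {x : Fin 8 → M} (hs : ∑ i, walshTriple x i ≠ 0) :
    ∑ i, walshWeight x i = 1 := by
  simp only [walshWeight, ← Finset.sum_div, div_self hs]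

theorem walshWeight_map {M N : Type*} [Field M] [Field N] (f : M →+* N) (x : Fin 8 → M) :
    walshWeight (f ∘ x) = f ∘ walshWeight x := by
  funext i
  simp only [walshWeight, Function.comp_apply, map_div₀, map_sum, map_walshTriple]
  rfl

theorem walshWeight_comp_translation {M : Type*} [Field M] (x : Fin 8 → M)
    {σ : Equiv.Perm (Fin 8)} (hσ : σ ∈ ({σ₁, σ₂, κ} : Set (Equiv.Perm (Fin 8)))) :
    walshWeight (x ∘ σ) = walshWeight x := by
  unfold walshWeight
  rw [walshTriple_comp_translation x hσ]

theorem walshWeight_comp_θ {M : Type*} [Field M] (x : Fin 8 → M) :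
    walshWeight (x ∘ θ) = fun i => walshWeight x (i + 1) := by
  have bijective_add_one : Function.Bijective fun i : ZMod 7 => i + 1 := by decide
  funext i
  simp only [walshWeight, walshTriple_comp_θ]
  rw [bijective_add_one.sum_comp (walshTriple x)]

theorem walshWeight_comp_φ₁ {M : Type*} [Field M] (x : Fin 8 → M) :
    walshWeight (x ∘ φ₁) = fun i => walshWeight x (2 * i) := by
  have bijective_two_mul : Function.Bijective fun i : ZMod 7 => 2 * i := by decide
  funext i
  simp only [walshWeight, walshTriple_comp_φ₁]
  rw [bijective_two_mul.sum_comp (walshTriple x)]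

/-- The functions of `x` used in characteristic `7`. The permutation `φ₁` acts on the six moments
involved by powers of the cube root of unity `4`. -/
def momentGen {M : Type*} [Field M] (x : Fin 8 → M) : Fin 8 → M :=
  let ω := zmodMean (walshWeight x)
  let ϑ := ω ^ 7 - ω
  let q := zmodMoment (walshWeight x)
  ![ϑ + q 2 + q 3, 4 * ϑ + 2 * q 2 + q 3, 2 * ϑ + 4 * q 2 + q 3,
    q 4 + q 5 + q 6, 4 * q 4 + 2 * q 5 + q 6, 2 * q 4 + 4 * q 5 + q 6,
    walshRatio x, ∑ a, x a]

theorem momentGen_map {M N : Type*} [Field M] [Field N] (f : M →+* N) (x : Fin 8 → M) :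
    momentGen (f ∘ x) = f ∘ momentGen x := by
  simp only [momentGen, walshWeight_map, zmodMean_map, zmodMoment_map, walshRatio_map]
  funext i
  fin_cases i <;> simp [map_ofNat f 2, map_ofNat f 4]

variable {M : Type*} [Field M] [CharP M 7] {x : Fin 8 → M}

theorem momentGen_comp (hs : ∑ i, walshTriple x i ≠ 0) {σ : Equiv.Perm (Fin 8)}
    (hσ : σ ∈ ({σ₁, σ₂, κ, θ} : Set (Equiv.Perm (Fin 8)))) : momentGen (x ∘ σ) = momentGen x := by
  have ratio_eq : walshRatio (x ∘ σ) = walshRatio x := walshRatio_comp x (by grind)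
  have sum_eq : ∑ a, (x ∘ σ) a = ∑ a, x a := Equiv.sum_comp σ x
  obtain hσ | rfl : σ ∈ ({σ₁, σ₂, κ} : Set (Equiv.Perm (Fin 8))) ∨ σ = θ := by
    simpa only [Set.mem_insert_iff, Set.mem_singleton_iff, or_assoc] using hσ
  · simp only [momentGen, walshWeight_comp_translation x hσ, ratio_eq, sum_eq]
  · simp only [momentGen, walshWeight_comp_θ, zmodMean_comp_add_right (sum_walshWeight hs),
      zmodMoment_comp_add_right (sum_walshWeight hs), artinSchreier_sub_cast, ratio_eq, sum_eq]

theorem momentGen_comp_φ₁ (x : Fin 8 → M) : momentGen (x ∘ φ₁) = momentGen x ∘ rotateTriples := by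
  have h7 : (7 : M) = 0 := CharP.ofNat_eq_zero M 7
  have four_mul_two : (4 : ZMod 7) * 2 = 1 := by decide
  have cast_four : ((4 : ZMod 7).cast : M) = 4 := by
    rw [← ZMod.natCast_val, show (4 : ZMod 7).val = 4 from rfl, Nat.cast_ofNat]
  have artinSchreier_four_mul (ω : M) : (4 * ω) ^ 7 - 4 * ω = 4 * (ω ^ 7 - ω) := by
    simpa only [cast_four] using artinSchreier_cast_mul ω (4 : ZMod 7)
  have ratio_eq : walshRatio (x ∘ φ₁) = walshRatio x := walshRatio_comp x (by simp)
  have sum_eq : ∑ a, (x ∘ φ₁) a = ∑ a, x a := Equiv.sum_comp φ₁ x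
  simp only [momentGen, walshWeight_comp_φ₁, zmodMean_comp_mul_left _ four_mul_two,
    zmodMoment_comp_mul_left _ four_mul_two, cast_four, artinSchreier_four_mul, ratio_eq, sum_eq]
  generalize zmodMean (walshWeight x) ^ 7 - zmodMean (walshWeight x) = ϑ
  generalize zmodMoment (walshWeight x) = q
  funext i
  fin_cases i <;> simp only [rotateTriples, Function.comp_apply, Fin.zero_eta, Fin.mk_one,
    Fin.reduceFinMk, Matrix.cons_val]
  · linear_combination (2 * q 2 + 9 * q 3) * h7
  · linear_combination (2 * ϑ + 4 * q 2 + 9 * q 3) * h7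
  · linear_combination (ϑ + 9 * q 2 + 9 * q 3) * h7
  · linear_combination (36 * q 4 + 146 * q 5 + 585 * q 6) * h7
  · linear_combination (146 * q 4 + 292 * q 5 + 585 * q 6) * h7
  · linear_combination (73 * q 4 + 585 * q 5 + 585 * q 6) * h7

variable {K : Type*} [Field K] [Algebra K M]

theorem mem_of_twisted_sums_mem {E : IntermediateField K M} {a b c : M} (h₀ : a + b + c ∈ E)
    (h₁ : 4 * a + 2 * b + c ∈ E) (h₂ : 2 * a + 4 * b + c ∈ E) : a ∈ E ∧ b ∈ E ∧ c ∈ E := by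
  have h7 : (7 : M) = 0 := CharP.ofNat_eq_zero M 7
  have a_eq : a = 5 * ((a + b + c) + 2 * (4 * a + 2 * b + c) + 4 * (2 * a + 4 * b + c)) := by
    linear_combination (-12 * a - 15 * b - 5 * c) * h7
  have b_eq : b = 5 * ((a + b + c) + 4 * (4 * a + 2 * b + c) + 2 * (2 * a + 4 * b + c)) := by
    linear_combination (-15 * a - 12 * b - 5 * c) * h7
  have c_eq : c = 5 * ((a + b + c) + (4 * a + 2 * b + c) + (2 * a + 4 * b + c)) := by
    linear_combination (-5 * a - 5 * b - 2 * c) * h7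
  refine ⟨a_eq ▸ ?_, b_eq ▸ ?_, c_eq ▸ ?_⟩ <;>
    apply_rules [add_mem, mul_mem, ofNat_mem]

theorem zmodMoment_mem_adjoin_momentGen (hs : ∑ i, walshTriple x i ≠ 0) {k : ℕ} (hk : k < 7) :
    zmodMoment (walshWeight x) k ∈ adjoin K (Set.range (momentGen x)) := by
  have gen_mem (i : Fin 8) : momentGen x i ∈ adjoin K (Set.range (momentGen x)) :=
    subset_adjoin K _ ⟨i, rfl⟩
  obtain ⟨-, h₂, h₃⟩ := mem_of_twisted_sums_mem (gen_mem 0) (gen_mem 1) (gen_mem 2)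
  obtain ⟨h₄, h₅, h₆⟩ := mem_of_twisted_sums_mem (gen_mem 3) (gen_mem 4) (gen_mem 5)
  interval_cases k
  · rw [zmodMoment_zero (sum_walshWeight hs)]
    exact one_mem _
  · rw [zmodMoment_one (sum_walshWeight hs)]
    exact zero_mem _
  exacts [h₂, h₃, h₄, h₅, h₆]

theorem rank_adjoin_momentGen_le (hx : adjoin K (Set.range x) = ⊤) (hy : ∀ i, walsh x i ≠ 0)
    (hs : ∑ i, walshTriple x i ≠ 0) :
    Module.rank (adjoin K (Set.range (momentGen x))) M ≤ 56 := by
  set E := adjoin K (Set.range (momentGen x))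
  have gen_mem (i : Fin 8) : momentGen x i ∈ E := subset_adjoin K _ ⟨i, rfl⟩
  have h2 : (2 : M) ≠ 0 := Ring.two_ne_zero (by rw [ringChar.eq M 7]; decide)
  set ω := zmodMean (walshWeight x) with ω_def
  have artinSchreier_mem : ω ^ 7 - ω ∈ E :=
    (mem_of_twisted_sums_mem (gen_mem 0) (gen_mem 1) (gen_mem 2)).1
  have le_sup : E ≤ E ⊔ K⟮ω⟯ := le_sup_left
  have ω_mem : ω ∈ E ⊔ K⟮ω⟯ :=
    (le_sup_right : K⟮ω⟯ ≤ E ⊔ K⟮ω⟯) (mem_adjoin_simple_self K ω)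
  have weight_mem (b : ZMod 7) : walshWeight x b ∈ E ⊔ K⟮ω⟯ := by
    rw [eq_one_sub_sum_zmodMoment (sum_walshWeight hs) b, ← ω_def]
    refine sub_mem (one_mem _) (sum_mem fun k hk => ?_)
    have b_mem : (b.cast : M) ∈ E ⊔ K⟮ω⟯ := by
      rw [← ZMod.natCast_val]
      exact _root_.natCast_mem _ _
    exact mul_mem (mul_mem (le_sup (zmodMoment_mem_adjoin_momentGen hs (Finset.mem_range.mp hk)))
      (pow_mem (sub_mem ω_mem b_mem) _)) (_root_.natCast_mem _ _)
  calc Module.rank E M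
    _ ≤ 7 * Module.rank ↥(E ⊔ K⟮ω⟯) M :=
      rank_le_mul_rank_sup_of_pow_sub_self_mem E (by norm_num) artinSchreier_mem
    _ ≤ 7 * 8 := by
      gcongr
      exact rank_le_eight_of_walshTriple_div_mem _ hx h2 hy hs weight_mem (le_sup (gen_mem 6))
        (le_sup (gen_mem 7))
    _ = 56 := by norm_num

theorem isRatExt_fixedSub_G36_of_charP_seven (K : Type) [Field K] [CharP K 7] :
    IsRatExt K (fixedSub K (Fin 8) G36) := by
  have h2 : (2 : K) ≠ 0 := Ring.two_ne_zero (by rw [ringChar.eq K 7]; decide)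
  have : CharP (RFF K (Fin 8)) 7 :=
    charP_of_injective_algebraMap (algebraMap K (RFF K (Fin 8))).injective 7
  have sum_ne := sum_walshTriple_Xvar_ne_zero h2
  exact isRatExt_fixedSub_G36 K K momentGen momentGen_map (fun σ hσ => momentGen_comp sum_ne hσ)
    (momentGen_comp_φ₁ _)
    (rank_adjoin_momentGen_le (adjoin_range_Xvar K (Fin 8)) (walsh_Xvar_ne_zero h2) sum_ne)

end Case

end ArtinSchreier

section FieldOfEight

open IntermediateField Polynomial

section Coordinates

variable {R : Type*} [CommRing R]

/-- A normal basis of the field with eight elements, in a ring of characteristic two. -/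
structure OctBasis (e : Fin 3 → R) : Prop where
  sum_eq_one : ∑ j, e j = 1
  sq_eq (j : Fin 3) : e j ^ 2 = e (j + 1)
  mul_eq (j : Fin 3) : e j * e (j + 1) = e j + e (j + 2)

/-- The multiplication of `R ⊗ F₈`, in coordinates with respect to a normal basis of `F₈`. -/
def octMul (m n : Fin 3 → R) (k : Fin 3) : R :=
  m (k + 2) * n (k + 2) + (m k * n (k + 1) + m (k + 1) * n k) +
    (m (k + 1) * n (k + 2) + m (k + 2) * n (k + 1))

/-- The product of the two nontrivial conjugates of `m`: shifting the coordinates amounts to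
conjugating. -/
def octAdj (m : Fin 3 → R) : Fin 3 → R := octMul (fun i => m (i + 1)) fun i => m (i + 2)

/-- The norm of `R ⊗ F₈` over `R`. Elements of `R` have all their coordinates equal. -/
def octNorm (m : Fin 3 → R) : R := octMul m (octAdj m) 0

/-- The image in `R` of the element of `R ⊗ F₈` with coordinates `m` under the `j`-th of the three
homomorphisms given by a normal basis `e` contained in `R`. -/
def octEval (e m : Fin 3 → R) (j : Fin 3) : R := ∑ i, e (j + i) * m i

section Map

variable {S : Type*} [CommRing S] (f : R →+* S)

theorem octMul_map (m n : Fin 3 → R) : octMul (f ∘ m) (f ∘ n) = f ∘ octMul m n := by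
  funext k
  simp only [octMul, Function.comp_apply, map_add, map_mul]

theorem octAdj_map (m : Fin 3 → R) : octAdj (f ∘ m) = f ∘ octAdj m :=
  octMul_map f (fun i => m (i + 1)) fun i => m (i + 2)

theorem octNorm_map (m : Fin 3 → R) : octNorm (f ∘ m) = f (octNorm m) := by
  rw [octNorm, octAdj_map, octMul_map, Function.comp_apply, octNorm]

theorem octEval_map (e m : Fin 3 → R) (j : Fin 3) :
    octEval (f ∘ e) (f ∘ m) j = f (octEval e m j) := by
  simp only [octEval, Function.comp_apply, map_sum, map_mul]

theorem OctBasis.map {e : Fin 3 → R} (he : OctBasis e) : OctBasis (f ∘ e) where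
  sum_eq_one := by simp only [Function.comp_apply, ← map_sum, he.sum_eq_one, map_one]
  sq_eq j := by simp only [Function.comp_apply, ← map_pow, he.sq_eq]
  mul_eq j := by simp only [Function.comp_apply, ← map_mul, ← map_add, he.mul_eq]

end Map

section Eval

theorem mul_mul_eq_prod (m : Fin 3 → R) (j : Fin 3) :
    m j * (m (j + 1) * m (j + 2)) = ∏ k, m k := by
  rw [Fin.prod_univ_three]
  fin_cases j <;> simp only [Fin.isValue, Fin.reduceAdd, Fin.zero_eta, Fin.mk_one,
    Fin.reduceFinMk, zero_add] <;> ring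

variable {e : Fin 3 → R}

theorem octEval_shift (e m : Fin 3 → R) (c j : Fin 3) :
    octEval e (fun i => m (i + c)) j = octEval e m (j - c) := by
  rw [octEval, octEval, ← Equiv.sum_comp (Equiv.addRight c) fun i => e (j - c + i) * m i]
  refine Finset.sum_congr rfl fun i _ => ?_
  rw [Equiv.coe_addRight, show j - c + (i + c) = j + i by abel]

theorem octEval_sub (e m n : Fin 3 → R) (j : Fin 3) :
    octEval e (m - n) j = octEval e m j - octEval e n j := by
  simp only [octEval, Pi.sub_apply, mul_sub, Finset.sum_sub_distrib]

theorem octEval_add (e m n : Fin 3 → R) (j : Fin 3) :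
    octEval e (m + n) j = octEval e m j + octEval e n j := by
  simp only [octEval, Pi.add_apply, mul_add, Finset.sum_add_distrib]

theorem octEval_sum_mul {ι : Type*} [Fintype ι] (e : Fin 3 → R) (m : ι → Fin 3 → R) (c : ι → R)
    (j : Fin 3) :
    octEval e (fun i => ∑ a, m a i * c a) j = ∑ a, octEval e (m a) j * c a := by
  simp only [octEval, Finset.mul_sum, Finset.sum_mul, mul_assoc]
  exact Finset.sum_comm

theorem octEval_mul (he : OctBasis e) (m n : Fin 3 → R) (j : Fin 3) :
    octEval e (octMul m n) j = octEval e m j * octEval e n j := by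
  have sq₀ := he.sq_eq 0
  have sq₁ := he.sq_eq 1
  have sq₂ := he.sq_eq 2
  have mul₀ := he.mul_eq 0
  have mul₁ := he.mul_eq 1
  have mul₂ := he.mul_eq 2
  simp only [Fin.isValue, Fin.reduceAdd, zero_add] at sq₀ sq₁ sq₂ mul₀ mul₁ mul₂
  fin_cases j <;> simp only [octEval, octMul, Fin.sum_univ_three, Fin.isValue, Fin.reduceAdd,
    Fin.zero_eta, Fin.mk_one, Fin.reduceFinMk, zero_add, add_zero]
  · linear_combination (-m 0 * n 0) * sq₀ - m 1 * n 1 * sq₁ - m 2 * n 2 * sq₂ -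
      (m 0 * n 1 + m 1 * n 0) * mul₀ - (m 1 * n 2 + m 2 * n 1) * mul₁ -
      (m 2 * n 0 + m 0 * n 2) * mul₂
  · linear_combination (-m 0 * n 0) * sq₁ - m 1 * n 1 * sq₂ - m 2 * n 2 * sq₀ -
      (m 0 * n 1 + m 1 * n 0) * mul₁ - (m 1 * n 2 + m 2 * n 1) * mul₂ -
      (m 2 * n 0 + m 0 * n 2) * mul₀
  · linear_combination (-m 0 * n 0) * sq₂ - m 1 * n 1 * sq₀ - m 2 * n 2 * sq₁ -
      (m 0 * n 1 + m 1 * n 0) * mul₂ - (m 1 * n 2 + m 2 * n 1) * mul₀ -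
      (m 2 * n 0 + m 0 * n 2) * mul₁

theorem octEval_adj (he : OctBasis e) (m : Fin 3 → R) (j : Fin 3) :
    octEval e (octAdj m) j = octEval e m (j + 1) * octEval e m (j + 2) := by
  rw [octAdj, octEval_mul he, octEval_shift, octEval_shift, mul_comm,
    show j - 2 = j + 1 by decide +revert, show j - 1 = j + 2 by decide +revert]

variable [CharP R 2]

theorem octEval_sq (he : OctBasis e) (m : Fin 3 → R) (j : Fin 3) :
    octEval e (m ^ 2) j = octEval e m (j + 2) ^ 2 := by
  simp only [octEval, CharTwo.sum_sq, mul_pow, he.sq_eq, Pi.pow_apply]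
  refine Finset.sum_congr rfl fun i _ => ?_
  rw [show j + 2 + i + 1 = j + i by decide +revert]

/-- Normal bases of `F₈` over `F₂` satisfying `OctBasis` are self-dual for the trace form. -/
theorem sum_mul_octEval (he : OctBasis e) (m : Fin 3 → R) (i : Fin 3) :
    ∑ j, e (i + j) * octEval e m j = m i := by
  have sq₀ := he.sq_eq 0
  have sq₁ := he.sq_eq 1
  have sq₂ := he.sq_eq 2
  have mul₀ := he.mul_eq 0
  have mul₁ := he.mul_eq 1
  have mul₂ := he.mul_eq 2
  have sum_eq := he.sum_eq_one
  have two_eq := CharTwo.two_eq_zero (R := R)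
  simp only [Fin.sum_univ_three, Fin.isValue, Fin.reduceAdd, zero_add]
    at sq₀ sq₁ sq₂ mul₀ mul₁ mul₂ sum_eq
  have sum_sq : e 0 ^ 2 + e 1 ^ 2 + e 2 ^ 2 = 1 := by
    linear_combination sq₀ + sq₁ + sq₂ + sum_eq
  have sum_mul : e 0 * e 1 + e 1 * e 2 + e 2 * e 0 = 0 := by
    linear_combination mul₀ + mul₁ + mul₂ + (e 0 + e 1 + e 2) * two_eq
  fin_cases i <;> simp only [octEval, Fin.sum_univ_three, Fin.isValue, Fin.reduceAdd,
    Fin.zero_eta, Fin.mk_one, Fin.reduceFinMk, zero_add, add_zero]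
  · linear_combination m 0 * sum_sq + (m 1 + m 2) * sum_mul
  · linear_combination m 1 * sum_sq + (m 0 + m 2) * sum_mul
  · linear_combination m 2 * sum_sq + (m 0 + m 1) * sum_mul

theorem octEval_injective (he : OctBasis e) : Function.Injective (octEval e) := fun m n h => by
  funext i
  rw [← sum_mul_octEval he m, h, sum_mul_octEval he]

theorem octNorm_eq_prod (he : OctBasis e) (m : Fin 3 → R) : octNorm m = ∏ j, octEval e m j := by
  have eval_eq (j : Fin 3) : octEval e (octMul m (octAdj m)) j = ∏ j, octEval e m j := by
    rw [octEval_mul he, octEval_adj he, mul_mul_eq_prod]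
  rw [octNorm, ← sum_mul_octEval he (octMul m (octAdj m))]
  simp only [eval_eq, zero_add, ← Finset.sum_mul, he.sum_eq_one, one_mul]

end Eval

theorem octBasis_of_root [CharP R 2] {ε : R} (hε : ε ^ 3 + ε ^ 2 + 1 = 0) :
    OctBasis ![ε, ε ^ 2, ε ^ 4] := by
  have two_eq := CharTwo.two_eq_zero (R := R)
  have pow_four : ε ^ 4 = ε ^ 2 + ε + 1 := by
    linear_combination (ε - 1) * hε - ε * two_eq
  have pow_eight : ε ^ 8 = ε := by
    linear_combination (ε ^ 4 + ε ^ 2 + ε + 1) * pow_four + pow_four +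
      (ε ^ 3 + 2 * ε ^ 2 + ε + 1) * two_eq
  have pow_three : ε ^ 3 = ε + ε ^ 4 := by
    linear_combination hε - pow_four - (ε ^ 2 + ε + 1) * two_eq
  have pow_six : ε ^ 6 = ε ^ 2 + ε := by
    linear_combination (ε ^ 3 + ε + ε ^ 4) * pow_three + pow_eight + ε ^ 5 * two_eq
  have pow_five : ε ^ 5 = ε ^ 4 + ε ^ 2 := by
    linear_combination ε * pow_four + pow_three + ε * two_eq
  refine ⟨?_, fun j => ?_, fun j => ?_⟩
  · simp only [Fin.sum_univ_three, Matrix.cons_val]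
    linear_combination pow_four + (ε + ε ^ 2) * two_eq
  all_goals fin_cases j <;> simp only [Fin.isValue, Fin.reduceAdd, Fin.zero_eta, Fin.mk_one,
    Fin.reduceFinMk, zero_add, Matrix.cons_val]
  · ring
  · linear_combination pow_eight
  · linear_combination pow_three
  · linear_combination pow_six
  · linear_combination pow_five

end Coordinates

section Label

/-- The points of the affine line over `F₈`, as coordinate vectors over `F₂`. -/
def octLabel (a : Fin 8) : Fin 3 → ZMod 2 :=
  ![(a.val / 4 + a.val / 2 + a.val : ℕ), (a.val / 2 : ℕ), (a.val : ℕ)]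

/-- The permutation `g` is the inverse of the map `z ↦ d * z ^ (2 ^ c) + b` of the affine line over
`F₈`, where `d` has norm one and the constant `b` is the label of `g 0`. -/
structure OctSemiaffine (d : Fin 3 → ZMod 2) (c : Fin 3) (g : Equiv.Perm (Fin 8)) : Prop where
  norm_eq_one : octNorm d = 1
  label_eq (a : Fin 8) :
    octLabel a = octMul d (fun k => octLabel (g a) (k + c)) + octLabel (g 0)

theorem octSemiaffine_translation {σ : Equiv.Perm (Fin 8)}
    (hσ : σ ∈ ({σ₁, σ₂, κ} : Set (Equiv.Perm (Fin 8)))) : OctSemiaffine ![1, 1, 1] 0 σ := by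
  obtain rfl | rfl | rfl := hσ <;> exact ⟨by decide, by decide⟩

theorem octSemiaffine_θ : OctSemiaffine ![0, 0, 1] 0 θ := ⟨by decide, by decide⟩

theorem octSemiaffine_φ₁ : OctSemiaffine ![1, 1, 1] 1 φ₁ := ⟨by decide, by decide⟩

theorem octNorm_octLabel_sub (a b : Fin 8) :
    octNorm (octLabel a - octLabel b) = if a = b then 0 else 1 := by
  decide +revert

variable (M : Type*) [Field M]

/-- The labels, as coordinate vectors over the field `M`, which is to have characteristic two. -/
def octPoint (a : Fin 8) (i : Fin 3) : M := (octLabel a i).cast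

end Label

section Functions

variable {M : Type*} [Field M] (u : Fin 8 → M)

/-- The mean of the distribution `u` on `F₈`. -/
def octMean (i : Fin 3) : M := ∑ a, octPoint M a i * u a

/-- The Artin–Schreier image of the mean. -/
def octDefect : Fin 3 → M := octMean u ^ 2 - octMean u

/-- The deviation of a point from the mean. -/
def octDev (a : Fin 8) : Fin 3 → M := octPoint M a - octMean u

/-- The vector whose images are `v (j + 2) ^ 2 / v j`, for `v j` those of `octDefect u`. -/
def octRatio (i : Fin 3) : M :=
  octMul (octDefect u ^ 2) (octAdj (octDefect u)) i / octNorm (octDefect u)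

/-- The expectation of the product of two conjugates of the deviation, multiplied by `octDefect u`
to make it invariant under the maps `z ↦ d * z + b`. -/
def octCofactor : Fin 3 → M :=
  octMul (octDefect u) fun i => ∑ a, octAdj (octDev u a) i * u a

/-- The expectation of the norm of the deviation. -/
def octMoment : M := ∑ a, octNorm (octDev u a) * u a

section Map

variable {N : Type*} [Field N] (f : M →+* N)

theorem octMean_map : octMean (f ∘ u) = f ∘ octMean u := by
  funext i
  simp only [octMean, octPoint, Function.comp_apply, map_sum, map_mul, map_zmod_cast]

theorem octDefect_map : octDefect (f ∘ u) = f ∘ octDefect u := by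
  funext i
  simp only [octDefect, octMean_map, Pi.sub_apply, Pi.pow_apply, Function.comp_apply, map_sub,
    map_pow]

theorem octDev_map (a : Fin 8) : octDev (f ∘ u) a = f ∘ octDev u a := by
  funext i
  simp only [octDev, octMean_map, octPoint, Pi.sub_apply, Function.comp_apply, map_sub,
    map_zmod_cast]

theorem octRatio_map : octRatio (f ∘ u) = f ∘ octRatio u := by
  have sq_map : (f ∘ octDefect u) ^ 2 = f ∘ (octDefect u ^ 2) := by
    funext i
    simp only [Pi.pow_apply, Function.comp_apply, map_pow]
  funext i
  simp only [octRatio, octDefect_map, sq_map, octAdj_map, octMul_map, octNorm_map,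
    Function.comp_apply, map_div₀]

theorem octCofactor_map : octCofactor (f ∘ u) = f ∘ octCofactor u := by
  simp only [octCofactor, octDefect_map, octDev_map, octAdj_map, ← octMul_map, Function.comp_apply,
    ← map_mul, ← map_sum]
  rfl

theorem octMoment_map : octMoment (f ∘ u) = f (octMoment u) := by
  simp only [octMoment, octDev_map, octNorm_map, Function.comp_apply, map_sum, map_mul]

end Map

end Functions

section Evaluation

variable {M : Type*} [Field M] {e : Fin 3 → M}

theorem octEval_octMean (e : Fin 3 → M) (u : Fin 8 → M) (j : Fin 3) :
    octEval e (octMean u) j = ∑ a, octEval e (octPoint M a) j * u a :=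
  octEval_sum_mul e (octPoint M) u j

theorem octEval_octCofactor (he : OctBasis e) (u : Fin 8 → M) (j : Fin 3) :
    octEval e (octCofactor u) j = octEval e (octDefect u) j *
      ∑ a, octEval e (octDev u a) (j + 1) * octEval e (octDev u a) (j + 2) * u a := by
  rw [octCofactor, octEval_mul he, octEval_sum_mul e fun a => octAdj (octDev u a)]
  simp only [octEval_adj he]

variable [CharP M 2]

theorem octEval_octDefect (he : OctBasis e) (u : Fin 8 → M) (j : Fin 3) :
    octEval e (octDefect u) j = octEval e (octMean u) (j + 2) ^ 2 - octEval e (octMean u) j := by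
  rw [octDefect, octEval_sub, octEval_sq he]

theorem octEval_octRatio (he : OctBasis e) (u : Fin 8 → M) (j : Fin 3) :
    octEval e (octRatio u) j = octEval e (octDefect u) (j + 2) ^ 2 *
      (octEval e (octDefect u) (j + 1) * octEval e (octDefect u) (j + 2)) /
        ∏ k, octEval e (octDefect u) k := by
  have eval_div : octEval e (octRatio u) j =
      octEval e (octMul (octDefect u ^ 2) (octAdj (octDefect u))) j / octNorm (octDefect u) := by
    simp only [octEval, octRatio, mul_div_assoc', Finset.sum_div]
  rw [eval_div, octEval_mul he, octEval_sq he, octEval_adj he, octNorm_eq_prod he]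

theorem octMoment_eq (he : OctBasis e) (u : Fin 8 → M) :
    octMoment u = ∑ a, (∏ j, octEval e (octDev u a) j) * u a := by
  simp only [octMoment, octNorm_eq_prod he]

end Evaluation

section Semiaffine

variable {M : Type*} [Field M] [CharP M 2] {e : Fin 3 → M}

theorem octEval_cast_sq (he : OctBasis e) (m : Fin 3 → ZMod 2) (j : Fin 3) :
    octEval e (fun i => (m i).cast) (j + 2) ^ 2 = octEval e (fun i => (m i).cast) j := by
  rw [← octEval_sq he]
  congr 1
  funext i
  rw [Pi.pow_apply, ← ZMod.cast_pow', ZMod.pow_card]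

theorem prod_octEval_cast (he : OctBasis e) {m : Fin 3 → ZMod 2} (hm : octNorm m = 1) :
    ∏ j, octEval e (fun i => (m i).cast) j = 1 := by
  rw [← octNorm_eq_prod he]
  exact (octNorm_map (ZMod.castHom dvd_rfl M) m).trans (by rw [hm, map_one])

variable {d : Fin 3 → ZMod 2} {c : Fin 3} {g : Equiv.Perm (Fin 8)}

theorem OctSemiaffine.octEval_octPoint (h : OctSemiaffine d c g) (he : OctBasis e) (a : Fin 8)
    (j : Fin 3) :
    octEval e (octPoint M a) j = octEval e (fun i => (d i).cast) j *
      octEval e (octPoint M (g a)) (j - c) + octEval e (octPoint M (g 0)) j := by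
  have point_eq : octPoint M a = octMul (fun i => (d i).cast)
      (fun k => octPoint M (g a) (k + c)) + octPoint M (g 0) := by
    have mul_map := octMul_map (ZMod.castHom dvd_rfl M) d fun k => octLabel (g a) (k + c)
    funext i
    rw [octPoint, h.label_eq, Pi.add_apply, ZMod.cast_add']
    exact congr_arg₂ (· + ·) (congr_fun mul_map i).symm rfl
  rw [point_eq, octEval_add, octEval_mul he, octEval_shift]

variable {u : Fin 8 → M}

theorem OctSemiaffine.octEval_octMean (h : OctSemiaffine d c g) (he : OctBasis e)
    (hu : ∑ a, u a = 1) (j : Fin 3) :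
    octEval e (octMean (u ∘ g)) j = octEval e (fun i => (d i).cast) j *
      octEval e (octMean u) (j - c) + octEval e (octPoint M (g 0)) j := by
  rw [_root_.octEval_octMean, _root_.octEval_octMean]
  calc ∑ a, octEval e (octPoint M a) j * u (g a)
    _ = ∑ a, (octEval e (fun i => (d i).cast) j * octEval e (octPoint M (g a)) (j - c) +
          octEval e (octPoint M (g 0)) j) * u (g a) :=
      Finset.sum_congr rfl fun a _ => by rw [h.octEval_octPoint he a]
    _ = ∑ a, (octEval e (fun i => (d i).cast) j * octEval e (octPoint M a) (j - c) +
          octEval e (octPoint M (g 0)) j) * u a :=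
      Equiv.sum_comp g fun a => (octEval e (fun i => (d i).cast) j *
        octEval e (octPoint M a) (j - c) + octEval e (octPoint M (g 0)) j) * u a
    _ = _ := by
      simp only [add_mul, Finset.sum_add_distrib, mul_assoc, ← Finset.mul_sum, hu, mul_one]

theorem OctSemiaffine.octEval_octDefect (h : OctSemiaffine d c g) (he : OctBasis e)
    (hu : ∑ a, u a = 1) (j : Fin 3) :
    octEval e (octDefect (u ∘ g)) j =
      octEval e (fun i => (d i).cast) j * octEval e (octDefect u) (j - c) := by
  rw [_root_.octEval_octDefect he, _root_.octEval_octDefect he, h.octEval_octMean he hu,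
    h.octEval_octMean he hu, CharTwo.add_sq, mul_pow, octEval_cast_sq he,
    show octEval e (octPoint M (g 0)) (j + 2) ^ 2 = octEval e (octPoint M (g 0)) j from
      octEval_cast_sq he _ j, show j + 2 - c = j - c + 2 by abel]
  ring

theorem OctSemiaffine.octEval_octDev (h : OctSemiaffine d c g) (he : OctBasis e)
    (hu : ∑ a, u a = 1) (a : Fin 8) (j : Fin 3) :
    octEval e (octDev (u ∘ g) a) j =
      octEval e (fun i => (d i).cast) j * octEval e (octDev u (g a)) (j - c) := by
  rw [octDev, octDev, octEval_sub, octEval_sub, h.octEval_octPoint he a, h.octEval_octMean he hu]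
  ring

theorem OctSemiaffine.prod_mul (h : OctSemiaffine d c g) (he : OctBasis e) (m : Fin 3 → M) :
    ∏ j, octEval e (fun i => (d i).cast) j * m (j - c) = ∏ j, m j := by
  rw [Finset.prod_mul_distrib, prod_octEval_cast he h.norm_eq_one, one_mul]
  exact Equiv.prod_comp (Equiv.subRight c) m

theorem OctSemiaffine.octRatio_comp (h : OctSemiaffine d c g) (he : OctBasis e)
    (hu : ∑ a, u a = 1) : octRatio (u ∘ g) = fun i => octRatio u (i + c) := by
  refine octEval_injective he (funext fun j => ?_)
  have factor : octEval e (fun i => (d i).cast) j * (octEval e (fun i => (d i).cast) (j + 1) *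
      octEval e (fun i => (d i).cast) (j + 2)) = 1 :=
    (mul_mul_eq_prod _ j).trans (prod_octEval_cast he h.norm_eq_one)
  rw [octEval_shift, octEval_octRatio he, octEval_octRatio he]
  simp only [h.octEval_octDefect he hu, mul_pow, octEval_cast_sq he]
  rw [h.prod_mul he, show j + 1 - c = j - c + 1 by abel, show j + 2 - c = j - c + 2 by abel]
  congr 1
  linear_combination octEval e (octDefect u) (j - c + 2) ^ 2 *
    (octEval e (octDefect u) (j - c + 1) * octEval e (octDefect u) (j - c + 2)) * factor

theorem OctSemiaffine.octCofactor_comp (h : OctSemiaffine d c g) (he : OctBasis e)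
    (hu : ∑ a, u a = 1) : octCofactor (u ∘ g) = fun i => octCofactor u (i + c) := by
  refine octEval_injective he (funext fun j => ?_)
  set l := octEval e fun i => (d i).cast with l_def
  have factor : l j * (l (j + 1) * l (j + 2)) = 1 :=
    (mul_mul_eq_prod _ j).trans (prod_octEval_cast he h.norm_eq_one)
  rw [octEval_shift, octEval_octCofactor he, octEval_octCofactor he, h.octEval_octDefect he hu,
    ← Equiv.sum_comp g fun a => octEval e (octDev u a) (j - c + 1) *
      octEval e (octDev u a) (j - c + 2) * u a, Finset.mul_sum, Finset.mul_sum]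
  refine Finset.sum_congr rfl fun a _ => ?_
  rw [h.octEval_octDev he hu, h.octEval_octDev he hu, ← l_def, Function.comp_apply,
    show j + 1 - c = j - c + 1 by abel, show j + 2 - c = j - c + 2 by abel]
  linear_combination octEval e (octDefect u) (j - c) * (octEval e (octDev u (g a)) (j - c + 1) *
    octEval e (octDev u (g a)) (j - c + 2) * u (g a)) * factor

theorem OctSemiaffine.octMoment_comp (h : OctSemiaffine d c g) (he : OctBasis e)
    (hu : ∑ a, u a = 1) : octMoment (u ∘ g) = octMoment u := by
  simp only [octMoment_eq he, h.octEval_octDev he hu, h.prod_mul he, Function.comp_apply]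
  exact Equiv.sum_comp g fun a => (∏ j, octEval e (octDev u a) j) * u a

end Semiaffine

section Weight

/-- The distribution on `F₈` with weights proportional to `x`. -/
def octWeight {M : Type*} [Field M] (x : Fin 8 → M) (a : Fin 8) : M := x a / ∑ b, x b

variable {M : Type*} [Field M] (x : Fin 8 → M)

theorem sum_octWeight {x : Fin 8 → M} (hs : ∑ a, x a ≠ 0) : ∑ a, octWeight x a = 1 := by
  simp only [octWeight, ← Finset.sum_div, div_self hs]

theorem octWeight_map {N : Type*} [Field N] (f : M →+* N) :
    octWeight (f ∘ x) = f ∘ octWeight x := by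
  funext a
  simp only [octWeight, Function.comp_apply, map_div₀, map_sum]

theorem octWeight_comp (g : Equiv.Perm (Fin 8)) : octWeight (x ∘ g) = octWeight x ∘ g := by
  funext a
  simp only [octWeight, Function.comp_apply, Equiv.sum_comp g x]

/-- The functions of `x` used in characteristic `2`. -/
def octGen (x : Fin 8 → M) : Fin 8 → M :=
  let r := octRatio (octWeight x)
  let s := octCofactor (octWeight x)
  ![r 0, r 1, r 2, s 0, s 1, s 2, octMoment (octWeight x), ∑ a, x a]

theorem octGen_map {M N : Type*} [Field M] [Field N] (f : M →+* N) (x : Fin 8 → M) :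
    octGen (f ∘ x) = f ∘ octGen x := by
  simp only [octGen, octWeight_map, octRatio_map, octCofactor_map, octMoment_map]
  funext i
  fin_cases i <;> simp

variable [CharP M 2] {e : Fin 3 → M} {x}

theorem octGen_comp (he : OctBasis e) (hs : ∑ a, x a ≠ 0) {σ : Equiv.Perm (Fin 8)}
    (hσ : σ ∈ ({σ₁, σ₂, κ, θ} : Set (Equiv.Perm (Fin 8)))) : octGen (x ∘ σ) = octGen x := by
  obtain ⟨d, h⟩ : ∃ d, OctSemiaffine d 0 σ := by
    obtain hσ | rfl : σ ∈ ({σ₁, σ₂, κ} : Set (Equiv.Perm (Fin 8))) ∨ σ = θ := by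
      simpa only [Set.mem_insert_iff, Set.mem_singleton_iff, or_assoc] using hσ
    exacts [⟨_, octSemiaffine_translation hσ⟩, ⟨_, octSemiaffine_θ⟩]
  have hu := sum_octWeight hs
  simp only [octGen, octWeight_comp, h.octRatio_comp he hu, h.octCofactor_comp he hu,
    h.octMoment_comp he hu, add_zero, Function.comp_apply, Equiv.sum_comp σ x]

theorem octGen_comp_φ₁ (he : OctBasis e) (hs : ∑ a, x a ≠ 0) :
    octGen (x ∘ φ₁) = octGen x ∘ rotateTriples := by
  have hu := sum_octWeight hs
  simp only [octGen, octWeight_comp, octSemiaffine_φ₁.octRatio_comp he hu,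
    octSemiaffine_φ₁.octCofactor_comp he hu, octSemiaffine_φ₁.octMoment_comp he hu,
    Function.comp_apply, Equiv.sum_comp φ₁ x]
  funext i
  fin_cases i <;> rfl

end Weight

section Rank

variable {M : Type*} [Field M] {e : Fin 3 → M} {u : Fin 8 → M} {K : Type*} [Field K] [Algebra K M]
  {F : IntermediateField K M}

theorem octEval_mem (he_mem : ∀ j, e j ∈ F) {m : Fin 3 → M} (hm : ∀ i, m i ∈ F) (j : Fin 3) :
    octEval e m j ∈ F :=
  sum_mem fun i _ => mul_mem (he_mem _) (hm i)

theorem sum_octEval_octDev_mul (hu : ∑ a, u a = 1) (j : Fin 3) :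
    ∑ a, octEval e (octDev u a) j * u a = 0 := by
  simp only [octDev, octEval_sub, sub_mul, Finset.sum_sub_distrib, ← Finset.mul_sum, hu, mul_one,
    octEval_octMean, sub_self]

variable [CharP M 2]

theorem octNorm_octPoint_sub (a b : Fin 8) :
    octNorm (octPoint M a - octPoint M b) = 1 - if a = b then 1 else 0 := by
  have point_sub : octPoint M a - octPoint M b =
      ZMod.castHom dvd_rfl M ∘ (octLabel a - octLabel b) := by
    funext i
    exact (map_sub (ZMod.castHom dvd_rfl M) (octLabel a i) (octLabel b i)).symm
  rw [point_sub, octNorm_map, octNorm_octLabel_sub]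
  split_ifs <;> simp

/-- The indicator function of `b` is one minus the norm of the difference to `b`, which is expanded
here around the mean. -/
theorem eq_one_sub_octMoment_add (he : OctBasis e) (hu : ∑ a, u a = 1) (b : Fin 8) :
    u b = 1 - (octMoment u + ∑ j, octEval e (octMean u - octPoint M b) j *
        (∑ a, octEval e (octDev u a) (j + 1) * octEval e (octDev u a) (j + 2) * u a) +
      octNorm (octMean u - octPoint M b)) := by
  set δ := octEval e (octMean u - octPoint M b)
  set D := fun a => octEval e (octDev u a)
  have norm_eq (a : Fin 8) : octNorm (octPoint M a - octPoint M b) =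
      ∏ j, D a j + ∑ j, δ j * (D a (j + 1) * D a (j + 2)) +
        ∑ j, δ (j + 1) * δ (j + 2) * D a j + ∏ j, δ j := by
    rw [octNorm_eq_prod he, ← sub_add_sub_cancel _ (octMean u)]
    simp only [octEval_add, Fin.prod_univ_three, Fin.sum_univ_three, Fin.isValue, Fin.reduceAdd,
      zero_add]
    change (D a 0 + δ 0) * (D a 1 + δ 1) * (D a 2 + δ 2) = _
    ring
  have linear_part : ∑ a, (∑ j, δ (j + 1) * δ (j + 2) * D a j) * u a = 0 := by
    simp only [Finset.sum_mul, mul_assoc]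
    rw [Finset.sum_comm]
    simp only [← Finset.mul_sum, D, sum_octEval_octDev_mul hu, mul_zero, Finset.sum_const_zero]
  have quadratic_part : ∑ a, (∑ j, δ j * (D a (j + 1) * D a (j + 2))) * u a =
      ∑ j, δ j * ∑ a, D a (j + 1) * D a (j + 2) * u a := by
    simp only [Finset.sum_mul, Finset.mul_sum, mul_assoc]
    exact Finset.sum_comm
  calc u b = 1 - ∑ a, octNorm (octPoint M a - octPoint M b) * u a := by
        simp [octNorm_octPoint_sub, sub_mul, hu]
    _ = _ := by
        simp only [norm_eq, add_mul, Finset.sum_add_distrib, linear_part, quadratic_part,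
          ← Finset.mul_sum, hu, mul_one, add_zero]
        rw [octMoment_eq he, octNorm_eq_prod he]

theorem octEval_octRatio_eq_div (he : OctBasis e) (hv : ∀ j, octEval e (octDefect u) j ≠ 0)
    (j : Fin 3) : octEval e (octRatio u) j =
      octEval e (octDefect u) (j + 2) ^ 2 / octEval e (octDefect u) j := by
  rw [octEval_octRatio he, ← mul_mul_eq_prod _ j, mul_div_mul_right]
  exact mul_ne_zero (hv _) (hv _)

theorem octWeight_mem (he : OctBasis e) (he_mem : ∀ j, e j ∈ F) (hu : ∑ a, u a = 1)
    (hv : ∀ j, octEval e (octDefect u) j ≠ 0) (mean_mem : ∀ i, octMean u i ∈ F)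
    (cofactor_mem : ∀ i, octCofactor u i ∈ F) (moment_mem : octMoment u ∈ F) (b : Fin 8) :
    u b ∈ F := by
  have defect_mem (j : Fin 3) : octEval e (octDefect u) j ∈ F :=
    octEval_mem he_mem (fun i => sub_mem (pow_mem (mean_mem i) 2) (mean_mem i)) j
  have dev_mem (j : Fin 3) : octEval e (octMean u - octPoint M b) j ∈ F := by
    refine octEval_mem he_mem (fun i => sub_mem (mean_mem i) ?_) j
    rw [octPoint, ← ZMod.natCast_val]
    exact _root_.natCast_mem F _
  rw [eq_one_sub_octMoment_add he hu b, octNorm_eq_prod he]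
  refine sub_mem (one_mem F) (add_mem (add_mem moment_mem (sum_mem fun j _ =>
    mul_mem (dev_mem j) ?_)) (prod_mem fun j _ => dev_mem j))
  rw [eq_div_of_mul_eq (hv j) ((mul_comm _ _).trans (octEval_octCofactor he u j).symm)]
  exact div_mem (octEval_mem he_mem cofactor_mem j) (defect_mem j)

theorem octEval_octDefect_pow_mem (he : OctBasis e) (he_mem : ∀ j, e j ∈ F)
    (hv : ∀ j, octEval e (octDefect u) j ≠ 0) (ratio_mem : ∀ i, octRatio u i ∈ F) :
    octEval e (octDefect u) 0 ^ 7 ∈ F := by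
  set v := octEval e (octDefect u)
  have eval_mem := octEval_mem he_mem ratio_mem
  have pow_eq : v 0 ^ 7 = octEval e (octRatio u) 1 ^ 4 * octEval e (octRatio u) 2 ^ 2 *
      octEval e (octRatio u) 0 := by
    have v₁ : v 1 ≠ 0 := hv 1
    have v₂ : v 2 ≠ 0 := hv 2
    simp only [octEval_octRatio_eq_div he hv, Fin.isValue, Fin.reduceAdd, zero_add]
    change v 0 ^ 7 = (v 0 ^ 2 / v 1) ^ 4 * (v 1 ^ 2 / v 2) ^ 2 * (v 2 ^ 2 / v 0)
    field_simp
  rw [pow_eq]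
  apply_rules [mul_mem, pow_mem]

theorem octDefect_mem (he : OctBasis e) (he_mem : ∀ j, e j ∈ F)
    (hv : ∀ j, octEval e (octDefect u) j ≠ 0) (ratio_mem : ∀ i, octRatio u i ∈ F)
    (eval_mem : octEval e (octDefect u) 0 ∈ F) (i : Fin 3) : octDefect u i ∈ F := by
  have succ_mem (j : Fin 3) (h : octEval e (octDefect u) (j + 2) ∈ F) :
      octEval e (octDefect u) j ∈ F := by
    rw [← div_div_cancel₀ (pow_ne_zero 2 (hv (j + 2))) (b := octEval e (octDefect u) j),
      ← octEval_octRatio_eq_div he hv]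
    exact div_mem (pow_mem h 2) (octEval_mem he_mem ratio_mem j)
  have mem₁ := succ_mem 1 eval_mem
  have mem₂ := succ_mem 2 mem₁
  rw [← sum_mul_octEval he (octDefect u) i]
  refine sum_mem fun j _ => mul_mem (he_mem _) ?_
  fin_cases j
  exacts [eval_mem, mem₁, mem₂]

theorem rank_le_eight_of_octDefect_mem (E : IntermediateField K M) {x : Fin 8 → M}
    (hx : adjoin K (Set.range x) = ⊤) (he : OctBasis e) (he_mem : ∀ j, e j ∈ E)
    (hs : ∑ a, x a ≠ 0) (hv : ∀ j, octEval e (octDefect (octWeight x)) j ≠ 0)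
    (defect_mem : ∀ i, octDefect (octWeight x) i ∈ E)
    (cofactor_mem : ∀ i, octCofactor (octWeight x) i ∈ E) (moment_mem : octMoment (octWeight x) ∈ E)
    (sum_mem : ∑ a, x a ∈ E) : Module.rank E M ≤ 8 := by
  set ω := octMean (octWeight x)
  set E₀ := E ⊔ K⟮ω 0⟯
  set E₁ := E₀ ⊔ K⟮ω 1⟯
  set E₂ := E₁ ⊔ K⟮ω 2⟯
  have le₀ : E ≤ E₀ := le_sup_left
  have le₁ : E₀ ≤ E₁ := le_sup_left
  have le₂ : E₁ ≤ E₂ := le_sup_left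
  have le : E ≤ E₂ := (le₀.trans le₁).trans le₂
  have mem_sup (F : IntermediateField K M) (a : M) : a ∈ F ⊔ K⟮a⟯ :=
    (le_sup_right : K⟮a⟯ ≤ F ⊔ K⟮a⟯) (mem_adjoin_simple_self K a)
  have mean_mem (i : Fin 3) : ω i ∈ E₂ := by
    fin_cases i
    exacts [le₂ (le₁ (mem_sup E _)), le₂ (mem_sup E₀ _), mem_sup E₁ _]
  have E₂_eq_top : E₂ = ⊤ := by
    rw [eq_top_iff, ← hx, adjoin_le_iff]
    rintro _ ⟨a, rfl⟩
    have weight_mem : x a / ∑ b, x b ∈ E₂ :=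
      octWeight_mem he (fun j => le (he_mem j)) (sum_octWeight hs) hv mean_mem
        (fun i => le (cofactor_mem i)) (le moment_mem) a
    exact div_mul_cancel₀ (x a) hs ▸ mul_mem weight_mem (le sum_mem)
  calc Module.rank E M
    _ ≤ 2 * Module.rank E₀ M := rank_le_mul_rank_sup_of_pow_sub_self_mem E one_lt_two (defect_mem 0)
    _ ≤ 2 * (2 * Module.rank E₁ M) := by
      gcongr
      exact rank_le_mul_rank_sup_of_pow_sub_self_mem E₀ one_lt_two (le₀ (defect_mem 1))
    _ ≤ 2 * (2 * (2 * Module.rank E₂ M)) := by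
      gcongr
      exact rank_le_mul_rank_sup_of_pow_sub_self_mem E₁ one_lt_two (le₁ (le₀ (defect_mem 2)))
    _ = 8 := by
      rw [E₂_eq_top, IntermediateField.rank_top]
      norm_num

theorem rank_adjoin_octGen_le {x : Fin 8 → M} (hx : adjoin K (Set.range x) = ⊤) (he : OctBasis e)
    (he_range : ∀ j, e j ∈ (algebraMap K M).range) (hs : ∑ a, x a ≠ 0)
    (hv : ∀ j, octEval e (octDefect (octWeight x)) j ≠ 0) :
    Module.rank (adjoin K (Set.range (octGen x))) M ≤ 56 := by
  set E := adjoin K (Set.range (octGen x))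
  have gen_mem (i : Fin 8) : octGen x i ∈ E := subset_adjoin K _ ⟨i, rfl⟩
  have ratio_mem (i : Fin 3) : octRatio (octWeight x) i ∈ E := by
    fin_cases i
    exacts [gen_mem 0, gen_mem 1, gen_mem 2]
  have cofactor_mem (i : Fin 3) : octCofactor (octWeight x) i ∈ E := by
    fin_cases i
    exacts [gen_mem 3, gen_mem 4, gen_mem 5]
  have he_mem (F : IntermediateField K M) (j : Fin 3) : e j ∈ F := by
    obtain ⟨r, hr⟩ := he_range j
    exact hr ▸ F.algebraMap_mem r
  set v := octEval e (octDefect (octWeight x)) 0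
  have le_sup : E ≤ E ⊔ K⟮v⟯ := le_sup_left
  have v_mem : v ∈ E ⊔ K⟮v⟯ :=
    (le_sup_right : K⟮v⟯ ≤ E ⊔ K⟮v⟯) (mem_adjoin_simple_self K v)
  calc Module.rank E M
    _ ≤ 7 * Module.rank ↥(E ⊔ K⟮v⟯) M :=
      rank_le_mul_rank_sup_of_pow_mem E (by norm_num)
        (octEval_octDefect_pow_mem he (he_mem E) hv ratio_mem)
    _ ≤ 7 * 8 := by
      gcongr
      exact rank_le_eight_of_octDefect_mem _ hx he (he_mem _) hs hv
        (octDefect_mem he (he_mem _) hv (fun i => le_sup (ratio_mem i)) v_mem)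
        (fun i => le_sup (cofactor_mem i)) (le_sup (gen_mem 6)) (le_sup (gen_mem 7))
    _ = 56 := by norm_num

end Rank

section Nonvanishing

theorem octEval_octDefect_octWeight_mul {M : Type*} [Field M] [CharP M 2] {e : Fin 3 → M}
    (he : OctBasis e) {x : Fin 8 → M} (hs : ∑ a, x a ≠ 0) (j : Fin 3) :
    octEval e (octDefect (octWeight x)) j * (∑ a, x a) ^ 2 =
      (∑ a, octEval e (octPoint M a) (j + 2) * x a) ^ 2 -
        (∑ a, octEval e (octPoint M a) j * x a) * ∑ a, x a := by
  have mean_mul (k : Fin 3) : octEval e (octMean (octWeight x)) k * ∑ a, x a =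
      ∑ a, octEval e (octPoint M a) k * x a := by
    simp only [octEval_octMean, octWeight, Finset.sum_mul, mul_assoc, div_mul_cancel₀ _ hs]
  rw [octEval_octDefect he, ← mean_mul, ← mean_mul]
  ring

variable {K : Type} [Field K]

theorem sum_Xvar_ne_zero {I : Type} [Fintype I] [Nonempty I] : ∑ a, Xvar K I a ≠ 0 := by
  classical
  have eval_ne : MvPolynomial.eval (Pi.single (Classical.arbitrary I) (1 : K))
      (∑ a, MvPolynomial.X a) ≠ 0 := by
    simp only [map_sum, MvPolynomial.eval_X, Finset.sum_pi_single', Finset.mem_univ, if_true]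
    exact one_ne_zero
  simpa only [map_sum, MvPolynomial.aeval_X] using aeval_Xvar_ne_zero eval_ne

variable [CharP K 2]

theorem octEval_octDefect_Xvar_ne_zero {e : Fin 3 → K} (he : OctBasis e) (j : Fin 3) :
    octEval (algebraMap K (RFF K (Fin 8)) ∘ e) (octDefect (octWeight (Xvar K (Fin 8)))) j ≠ 0 := by
  have : CharP (RFF K (Fin 8)) 2 :=
    charP_of_injective_algebraMap (algebraMap K (RFF K (Fin 8))).injective 2
  have point_map (a : Fin 8) :
      octPoint (RFF K (Fin 8)) a = algebraMap K (RFF K (Fin 8)) ∘ octPoint K a := by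
    funext i
    exact (map_zmod_cast _ _).symm
  have eval_ne : MvPolynomial.eval ![1, 0, 0, 0, 0, 0, 0, 1]
      ((∑ a, MvPolynomial.C (octEval e (octPoint K a) (j + 2)) * MvPolynomial.X a) ^ 2 -
        (∑ a, MvPolynomial.C (octEval e (octPoint K a) j) * MvPolynomial.X a) *
          ∑ a, MvPolynomial.X a) ≠ 0 := by
    have eval_const {a : Fin 8} {c : ZMod 2} (h : octLabel a = fun _ => c) (k : Fin 3) :
        octEval e (octPoint K a) k = c.cast := by
      simp only [octEval, octPoint, h, ← Finset.sum_mul]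
      exact (congr_arg (· * _) (Equiv.sum_comp (Equiv.addLeft k) e)).trans
        (by rw [he.sum_eq_one, one_mul])
    have eval_zero : ∀ k, octEval e (octPoint K 0) k = 0 := by
      simpa using eval_const (a := 0) (c := 0) (by decide)
    have eval_seven : ∀ k, octEval e (octPoint K 7) k = 1 := by
      simpa using eval_const (a := 7) (c := 1) (by decide)
    simp [Fin.sum_univ_eight, eval_zero, eval_seven, CharTwo.add_self_eq_zero]
  refine left_ne_zero_of_mul (b := (∑ a, Xvar K (Fin 8) a) ^ 2) ?_
  rw [octEval_octDefect_octWeight_mul (he.map _) sum_Xvar_ne_zero]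
  simp only [point_map, octEval_map]
  simpa only [map_sub, map_pow, map_mul, map_sum, MvPolynomial.aeval_C, MvPolynomial.aeval_X]
    using aeval_Xvar_ne_zero eval_ne

end Nonvanishing

theorem isRatExt_fixedSub_G36_of_charP_two (K : Type) [Field K] [CharP K 2] :
    IsRatExt K (fixedSub K (Fin 8) G36) := by
  let K' := SplittingField (X ^ 3 + X ^ 2 + 1 : K[X])
  have : CharP K' 2 := charP_of_injective_algebraMap (algebraMap K K').injective 2
  have : CharP (RFF K' (Fin 8)) 2 :=
    charP_of_injective_algebraMap (algebraMap K' (RFF K' (Fin 8))).injective 2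
  obtain ⟨ε, hε⟩ : ∃ ε : K', ε ^ 3 + ε ^ 2 + 1 = 0 := by
    have natDegree_eq : (X ^ 3 + X ^ 2 + 1 : K[X]).natDegree = 3 := by compute_degree!
    obtain ⟨ε, hε⟩ := (SplittingField.splits (X ^ 3 + X ^ 2 + 1 : K[X])).exists_eval_eq_zero
      (degree_ne_of_natDegree_ne (by rw [natDegree_map, natDegree_eq]; norm_num))
    exact ⟨ε, by simpa using hε⟩
  have he := octBasis_of_root hε
  exact isRatExt_fixedSub_G36 K K' octGen octGen_map
    (fun σ hσ => octGen_comp (he.map (algebraMap K' (RFF K' (Fin 8)))) sum_Xvar_ne_zero hσ)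
    (octGen_comp_φ₁ (he.map (algebraMap K' (RFF K' (Fin 8)))) sum_Xvar_ne_zero)
    (rank_adjoin_octGen_le (adjoin_range_Xvar K' (Fin 8)) (he.map _) (fun j => ⟨_, rfl⟩)
      sum_Xvar_ne_zero (octEval_octDefect_Xvar_ne_zero he))

end FieldOfEight

/-- **Rationality for `G₃₆`.** For any field `K`, the subgroup `G₃₆ ⊆ S₈` of order 168 generated by `σ₁`, `σ₂`, `κ`, `θ = (2,3,7,4,5,6,8)` and `φ₁ = (2,3,4)(7,6,5)` has `K`-rational fixed field. -/
theorem rationality_G36 (K : Type) [Field K] :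
    IsRatExt K ↥(fixedSub K (Fin 8) (Subgroup.closure
      {Equiv.swap (0 : Fin 8) 1 * Equiv.swap 2 3 * Equiv.swap 4 5 * Equiv.swap 6 7,
       Equiv.swap (0 : Fin 8) 2 * Equiv.swap 1 3 * Equiv.swap 4 6 * Equiv.swap 5 7,
       Equiv.swap (0 : Fin 8) 4 * Equiv.swap 1 5 * Equiv.swap 2 6 * Equiv.swap 3 7,
       Equiv.swap (1 : Fin 8) 2 * Equiv.swap 2 6 * Equiv.swap 6 3 * Equiv.swap 3 4 * Equiv.swap 4 5 * Equiv.swap 5 7,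
       (Equiv.swap (1 : Fin 8) 2 * Equiv.swap 2 3) * (Equiv.swap (6 : Fin 8) 5 * Equiv.swap 5 4)})) := by
  by_cases h2 : (2 : K) = 0
  · have : CharP K 2 := CharTwo.of_one_ne_zero_of_two_eq_zero one_ne_zero h2
    exact isRatExt_fixedSub_G36_of_charP_two K
  by_cases h7 : (7 : K) = 0
  · have : CharP K 7 := (CharP.charP_iff_prime_eq_zero (by norm_num)).mpr (by exact_mod_cast h7)
    exact isRatExt_fixedSub_G36_of_charP_seven K
  · exact isRatExt_fixedSub_G36_of_fourteen_ne_zero K h2 h7
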